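/- arXiv:2109.14504 — 2 statements merged into one kernel-verified Lean document; each statement's English description precedes it below -/
import Mathlib

section
/- Let 1 < p ≤ ∞ with Hölder conjugate p*, and let σ = (σ_j)_{j∈ℕ} be a non-increasing non-negative sequence with σ ∈ ℓ_{p*}. There exist absolute constants C, c ∈ (0,∞) such that for every n ∈ ℕ, the Gelfand numbers of the diagonal operator D_σ : ℓ_p → ℓ₂ satisfy c_n(D_σ : ℓ_p → ℓ₂) ≤ C·√(p*)·n^{−1/2}·(Σ_{j=k}^∞ σ_j^{p*})^{1/p*}, where k := max(1, ⌈c·n/p*⌉). In particular, the sequence (c_n(D_σ : ℓ_p → ℓ₂))_{n∈ℕ} belongs to the weak-ℓ₂ space ℓ_{2,∞}, i.e., sup_n n^{1/2}·c_n(D_σ : ℓ_p → ℓ₂) < ∞. -/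
open scoped ENNReal NNReal

/-- The Hölder conjugate `p*` of `p ∈ (1, ∞]`, as a real number
(with the convention `(∞ : ℝ≥0∞).toReal = 0`, so `pstar ∞ = 1`). -/
noncomputable def pstar (p : ℝ≥0∞) : ℝ := (1 - 1 / p.toReal)⁻¹

/-- The `n`-th Gelfand number of the diagonal operator `D_σ : ℓ_p → ℓ₂`:
the infimum over all closed linear subspaces `E` of `ℓ_p` of codimension at most `n - 1`
(expressed as kernels of linear maps into `ℝ^{n-1}` that are closed in the `ℓ_p`-norm) of
`sup {‖D_σ x‖₂ : x ∈ B_{ℓ_p} ∩ E}`. -/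
noncomputable def gelfandSeq (p : ℝ≥0∞) (σ : ℕ → ℝ) (n : ℕ) : ℝ :=
  sInf { t | ∃ f : (lp (fun _ : ℕ => ℝ) p) →ₗ[ℝ] (Fin (n - 1) → ℝ),
      (∀ x : lp (fun _ : ℕ => ℝ) p,
          (∀ ε : ℝ, 0 < ε → ∃ y : lp (fun _ : ℕ => ℝ) p, f y = 0 ∧ ‖x - y‖ < ε) →
          f x = 0) ∧
      t = sSup ((fun x : lp (fun _ : ℕ => ℝ) p => Real.sqrt (∑' j, (σ j * x j) ^ 2)) ''
        {x | ‖x‖ ≤ 1 ∧ f x = 0}) }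

/-!
Write `q = p*`. Make the first `K` coordinates of `x` vanish, together with `m` random sign
combinations of the next `N` coordinates of `y = D_σ x`; the coordinates beyond `K + N` are
negligible for large `N`. For a random `m × N` sign matrix `a`, the lower Khinchine inequality gives
`𝔼 ∑ i, |⟨a i, y⟩| ≥ e^(-1/2) m ‖y‖₂` for each fixed `y`. By symmetrization and the contraction
principle, the deviation of `∑ i, |⟨a i, y⟩|` from its mean, at a `y` chosen depending on `a`,
is on average at most twice a bound for `𝔼 sup_y ∑ i, ε i ⟨a i, y⟩`. By duality that supremum is an
`ℓ_q` norm of Rademacher sums weighted by `σ`, so the upper Khinchine inequality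
(moments of order `q`, with constant `≲ √q`) bounds it by a multiple of `√(q m) ‖σ‖_q`.
Hence some matrix `a` satisfies `‖y‖₂ ≲ √(q / m) ‖σ‖_q` whenever all `⟨a i, y⟩` vanish; take
`K ≈ n / 4` and `m ≈ 3 n / 4`.
-/

section

open Finset Function
open scoped BigOperators

section Expect

variable {ι κ 𝕜 : Type*} [Fintype ι] [Fintype κ] [Field 𝕜] [CharZero 𝕜]

lemma expect_pi_prod [DecidableEq ι] (f : ι → κ → 𝕜) :
    𝔼 a : ι → κ, ∏ i, f i (a i) = ∏ i, 𝔼 s, f i s := by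
  simp only [Fintype.expect_eq_sum_div_card, prod_div_distrib, prod_univ_sum,
    Fintype.piFinset_univ, Fintype.card_pi, Nat.cast_prod]

lemma expect_pi_apply [DecidableEq ι] [Nonempty κ] (k : ι) (g : κ → 𝕜) :
    𝔼 a : ι → κ, g (a k) = 𝔼 s, g s := by
  have factor (i : ι) : 𝔼 s, (if i = k then g s else 1) = if i = k then 𝔼 s, g s else 1 := by
    split_ifs <;> simp
  simpa [factor] using expect_pi_prod fun i s => if i = k then g s else 1

lemma expect_units_int (f : ℤˣ → 𝕜) : 𝔼 s, f s = (f 1 + f (-1)) / 2 := by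
  rw [Fintype.expect_eq_sum_div_card]
  simp

lemma expect_rpow_inv_le {q : ℝ} (hq : 1 ≤ q) [Nonempty ι] {Y : ι → ℝ} (hY : ∀ i, 0 ≤ Y i) :
    𝔼 i, Y i ^ q⁻¹ ≤ (𝔼 i, Y i) ^ q⁻¹ := by
  have h := Real.compact_inner_le_weight_mul_Lp_of_nonneg univ hq (w := fun _ : ι => 1)
    (fun _ => zero_le_one) fun i => Real.rpow_nonneg (hY i) q⁻¹
  simpa [Real.rpow_inv_rpow (hY _) (zero_lt_one.trans_le hq).ne'] using h

end Expect

section Rademacher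

variable {ι : Type*} [Fintype ι]

/-- The Rademacher sum `∑ i, ε i * u i`. A random sign vector is modelled by averaging
over all `ε : ι → ℤˣ` with `𝔼`. -/
noncomputable def rademacherSum (ε : ι → ℤˣ) (u : ι → ℝ) : ℝ := ∑ i, (ε i : ℝ) * u i

lemma rademacherSum_smul (ε : ι → ℤˣ) (c : ℝ) (u : ι → ℝ) :
    rademacherSum ε (c • u) = c * rademacherSum ε u := by
  simp only [rademacherSum, Pi.smul_apply, smul_eq_mul, mul_sum, mul_left_comm]

lemma rademacherSum_neg (ε : ι → ℤˣ) (u : ι → ℝ) :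
    rademacherSum ε (-u) = -rademacherSum ε u := by
  simp [rademacherSum]

lemma units_int_cast_sq (s : ℤˣ) : (s : ℝ) ^ 2 = 1 := by
  rcases Int.units_eq_one_or s with rfl | rfl <;> simp

variable [DecidableEq ι]

lemma expect_exp_rademacherSum_le (u : ι → ℝ) :
    𝔼 ε, Real.exp (rademacherSum ε u) ≤ Real.exp ((∑ i, u i ^ 2) / 2) := by
  calc 𝔼 ε, Real.exp (rademacherSum ε u)
      = ∏ i, 𝔼 s : ℤˣ, Real.exp (s * u i) := by
        simp only [rademacherSum, Real.exp_sum]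
        exact expect_pi_prod fun i (s : ℤˣ) => Real.exp (s * u i)
    _ = ∏ i, Real.cosh (u i) := by simp only [expect_units_int, Real.cosh_eq]; simp
    _ ≤ ∏ i, Real.exp (u i ^ 2 / 2) :=
        prod_le_prod (fun i _ => (Real.cosh_pos _).le) fun i _ => Real.cosh_le_exp_half_sq _
    _ = Real.exp ((∑ i, u i ^ 2) / 2) := by rw [← Real.exp_sum, sum_div]

/-- Pairing with a Riesz product: only the terms linear in the signs survive the average. -/
lemma expect_rademacherSum_mul_prod (u v : ι → ℝ) :
    𝔼 ε, (rademacherSum ε u : ℂ) * ∏ i, (1 + (ε i : ℂ) * v i * Complex.I) =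
      (∑ i, u i * v i : ℝ) * Complex.I := by
  have factor (i k : ι) : 𝔼 s : ℤˣ, (if i = k then (s : ℂ) else 1) *
      (1 + (s : ℂ) * v i * Complex.I) = if i = k then v k * Complex.I else 1 := by
    rw [expect_units_int]
    split_ifs with h
    · subst h; push_cast; ring
    · push_cast; ring
  have coord (k : ι) : 𝔼 ε : ι → ℤˣ, (ε k : ℂ) * ∏ i, (1 + (ε i : ℂ) * v i * Complex.I) =
      v k * Complex.I := by
    have h := expect_pi_prod fun i (s : ℤˣ) =>
      (if i = k then (s : ℂ) else 1) * (1 + (s : ℂ) * v i * Complex.I)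
    simpa only [factor, prod_mul_distrib, prod_ite_eq', mem_univ, if_true] using h
  calc 𝔼 ε, (rademacherSum ε u : ℂ) * ∏ i, (1 + (ε i : ℂ) * v i * Complex.I)
      = ∑ k, u k * 𝔼 ε : ι → ℤˣ, (ε k : ℂ) * ∏ i, (1 + (ε i : ℂ) * v i * Complex.I) := by
        simp only [mul_expect, ← expect_sum_comm, rademacherSum]
        push_cast
        simp only [sum_mul, mul_left_comm, mul_assoc]
    _ = (∑ i, u i * v i : ℝ) * Complex.I := by
        simp only [coord]
        push_cast
        simp only [sum_mul, mul_assoc]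

lemma norm_one_add_mul_I_le_exp (x : ℝ) : ‖(1 + x * Complex.I : ℂ)‖ ≤ Real.exp (x ^ 2 / 2) := by
  have h := Complex.norm_add_mul_I 1 x
  rw [Complex.ofReal_one] at h
  rw [h, Real.exp_half]
  exact Real.sqrt_le_sqrt (by linarith [Real.add_one_le_exp (x ^ 2)])

lemma sum_mul_le_expect_abs_rademacherSum (u v : ι → ℝ) :
    ∑ i, u i * v i ≤ Real.exp ((∑ i, v i ^ 2) / 2) * 𝔼 ε, |rademacherSum ε u| := by
  have norm_prod (ε : ι → ℤˣ) : ‖∏ i, (1 + (ε i : ℂ) * v i * Complex.I)‖ ≤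
      Real.exp ((∑ i, v i ^ 2) / 2) := by
    rw [norm_prod, sum_div, Real.exp_sum]
    refine prod_le_prod (fun _ _ => norm_nonneg _) fun i _ => ?_
    simpa [mul_pow, units_int_cast_sq] using norm_one_add_mul_I_le_exp (ε i * v i)
  calc ∑ i, u i * v i ≤ ‖((∑ i, u i * v i : ℝ) * Complex.I : ℂ)‖ := by
        rw [norm_mul, Complex.norm_I, mul_one, Complex.norm_real]
        exact le_abs_self _
    _ ≤ 𝔼 ε, ‖(rademacherSum ε u : ℂ) * ∏ i, (1 + (ε i : ℂ) * v i * Complex.I)‖ := by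
        rw [← expect_rademacherSum_mul_prod]
        exact RCLike.norm_expect_le (K := ℂ)
    _ ≤ 𝔼 ε, Real.exp ((∑ i, v i ^ 2) / 2) * |rademacherSum ε u| := by
        refine expect_le_expect fun ε _ => ?_
        rw [norm_mul, Complex.norm_real, Real.norm_eq_abs, mul_comm]
        gcongr
        exact norm_prod ε
    _ = _ := (mul_expect ..).symm

lemma sqrt_sum_sq_le_expect_abs_rademacherSum (u : ι → ℝ) :
    √(∑ i, u i ^ 2) ≤ Real.exp (1 / 2) * 𝔼 ε, |rademacherSum ε u| := by
  set r := √(∑ i, u i ^ 2)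
  have hsq : r ^ 2 = ∑ i, u i ^ 2 := Real.sq_sqrt (sum_nonneg fun i _ => sq_nonneg _)
  have hr : 0 ≤ r := Real.sqrt_nonneg _
  rcases hr.eq_or_lt with h0 | hpos
  · rw [← h0]
    exact mul_nonneg (Real.exp_pos _).le (expect_nonneg fun _ _ => abs_nonneg _)
  · have h := sum_mul_le_expect_abs_rademacherSum u fun i => u i / r
    simp only [div_pow, mul_div_assoc', ← sq, ← sum_div, ← hsq] at h
    rwa [div_self (by positivity), sq, mul_div_cancel_right₀ _ hpos.ne'] at h

lemma expect_exp_abs_rademacherSum_le (u : ι → ℝ) :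
    𝔼 ε, Real.exp |rademacherSum ε u| ≤ 2 * Real.exp ((∑ i, u i ^ 2) / 2) := by
  calc 𝔼 ε, Real.exp |rademacherSum ε u|
      ≤ 𝔼 ε, (Real.exp (rademacherSum ε u) + Real.exp (rademacherSum ε (-u))) := by
        refine expect_le_expect fun ε _ => ?_
        rw [rademacherSum_neg]
        rcases abs_choice (rademacherSum ε u) with h | h <;> rw [h] <;> simp [Real.exp_nonneg]
    _ ≤ Real.exp ((∑ i, u i ^ 2) / 2) + Real.exp ((∑ i, (-u) i ^ 2) / 2) := by
        rw [expect_add_distrib]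
        exact add_le_add (expect_exp_rademacherSum_le u) (expect_exp_rademacherSum_le (-u))
    _ = _ := by simp only [Pi.neg_apply, neg_sq]; ring

lemma rpow_le_rpow_mul_exp {q x c : ℝ} (hq : 0 < q) (hc : 0 < c) (hx : 0 ≤ x) :
    x ^ q ≤ (q / c) ^ q * Real.exp (c * x) := by
  have hlin : x ≤ q / c * Real.exp (c * x / q) := by
    calc x = q / c * (c * x / q) := by field_simp
      _ ≤ _ := by gcongr; linarith [Real.add_one_le_exp (c * x / q)]
  calc x ^ q ≤ (q / c * Real.exp (c * x / q)) ^ q := Real.rpow_le_rpow hx hlin hq.le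
    _ = _ := by
      rw [Real.mul_rpow (by positivity) (Real.exp_pos _).le, ← Real.exp_mul,
        div_mul_cancel₀ _ hq.ne']

lemma expect_abs_rademacherSum_rpow_le {q : ℝ} (hq : 1 ≤ q) (u : ι → ℝ) :
    𝔼 ε, |rademacherSum ε u| ^ q ≤ (2 * √(Real.exp 1 * q * ∑ i, u i ^ 2)) ^ q := by
  have hq0 : 0 < q := zero_lt_one.trans_le hq
  rcases (sum_nonneg fun i _ => sq_nonneg (u i) : 0 ≤ ∑ i, u i ^ 2).eq_or_lt with h0 | hpos
  · have hu : u = 0 := by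
      ext i
      simpa using (sum_eq_zero_iff_of_nonneg fun i _ => sq_nonneg (u i)).1 h0.symm i (mem_univ i)
    simp [hu, rademacherSum, Real.zero_rpow hq0.ne']
  set Q := ∑ i, u i ^ 2
  set c := √(q / Q)
  have hc : 0 < c := Real.sqrt_pos.2 (by positivity)
  have hcQ : c ^ 2 * Q = q := by rw [Real.sq_sqrt (by positivity), div_mul_cancel₀ _ hpos.ne']
  have hexp : 𝔼 ε, Real.exp (c * |rademacherSum ε u|) ≤ 2 * Real.exp (q / 2) := by
    have hexponent : ∑ i, (c • u) i ^ 2 = q := by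
      simp only [Pi.smul_apply, smul_eq_mul, mul_pow, ← mul_sum]
      exact hcQ
    simpa only [hexponent, rademacherSum_smul, abs_mul, abs_of_pos hc] using
      expect_exp_abs_rademacherSum_le (c • u)
  have hscale : q / c * Real.exp (1 / 2) = √(Real.exp 1 * q * Q) := by
    refine ((Real.sqrt_eq_iff_eq_sq (by positivity) (by positivity)).2 ?_).symm
    rw [mul_pow, ← Real.exp_nat_mul, ← hcQ]
    field_simp
    norm_num
  calc 𝔼 ε, |rademacherSum ε u| ^ q
      ≤ 𝔼 ε, (q / c) ^ q * Real.exp (c * |rademacherSum ε u|) :=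
        expect_le_expect fun ε _ => rpow_le_rpow_mul_exp hq0 hc (abs_nonneg _)
    _ ≤ (q / c) ^ q * (2 * Real.exp (q / 2)) := by
        rw [← mul_expect]
        gcongr
    _ ≤ (q / c) ^ q * (2 ^ q * Real.exp (q / 2)) := by
        gcongr
        simpa using Real.rpow_le_rpow_of_exponent_le one_le_two hq
    _ = (2 * (q / c * Real.exp (1 / 2))) ^ q := by
        rw [Real.mul_rpow two_pos.le (by positivity), Real.mul_rpow (by positivity) (by positivity),
          ← Real.exp_mul]
        ring_nf
    _ = _ := by rw [hscale]

end Rademacher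

section Contraction

variable {ι T : Type*} [DecidableEq ι]

/-- The sign vector obtained from `ε` by reversing its `k`-th sign; averaging over `ε` and
`flipSign k ε` isolates the contribution of the `k`-th coordinate. -/
def flipSign (k : ι) (ε : ι → ℤˣ) : ι → ℤˣ := update ε k (-ε k)

lemma flipSign_apply_self (k : ι) (ε : ι → ℤˣ) : flipSign k ε k = -ε k :=
  update_self ..

lemma flipSign_involutive (k : ι) : Involutive (flipSign k) := fun ε => by simp [flipSign]

variable [Fintype ι]

lemma two_mul_expect_eq_expect_add_flipSign (k : ι) (F : (ι → ℤˣ) → ℝ) :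
    2 * 𝔼 ε, F ε = 𝔼 ε, (F ε + F (flipSign k ε)) := by
  rw [expect_add_distrib, two_mul]
  congr 1
  exact Fintype.expect_equiv (flipSign_involutive k).toPerm _ _ fun ε => by
    simp [flipSign_involutive k ε]

/-- Suprema over `T` are replaced by selections `t` depending on the signs. For each pair `ε`,
`flipSign k ε` either both choices are kept or they are exchanged; since `|φ a - φ b| ≤ |a - b|`,
one of the two options does not decrease the average. -/
lemma exists_expect_coord_lipschitz_le (k : ι) {H : (ι → ℤˣ) → T → ℝ}
    (hH : ∀ ε y, H (flipSign k ε) y = H ε y) {φ : ℝ → ℝ} (hφ : LipschitzWith 1 φ)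
    (v : T → ℝ) (t : (ι → ℤˣ) → T) :
    ∃ t' : (ι → ℤˣ) → T, 𝔼 ε, (H ε (t ε) + ε k * φ (v (t ε))) ≤
      𝔼 ε, (H ε (t' ε) + ε k * v (t' ε)) := by
  classical
  let keep (ε : ι → ℤˣ) : Prop :=
    ε k * (φ (v (t ε)) - φ (v (t (flipSign k ε)))) ≤ ε k * (v (t ε) - v (t (flipSign k ε)))
  have keep_flip (ε) : keep (flipSign k ε) ↔ keep ε := by
    simp only [keep, flipSign_involutive k ε, flipSign_apply_self]
    push_cast
    constructor <;> intro h <;> linarith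
  refine ⟨fun ε => if keep ε then t ε else t (flipSign k ε), ?_⟩
  refine le_of_mul_le_mul_left ?_ (zero_lt_two' ℝ)
  rw [two_mul_expect_eq_expect_add_flipSign k, two_mul_expect_eq_expect_add_flipSign k]
  refine expect_le_expect fun ε _ => ?_
  simp only [keep_flip, flipSign_involutive k ε, flipSign_apply_self, hH, Units.val_neg,
    Int.cast_neg]
  split_ifs with hkeep
  · linarith [show _ ≤ _ from hkeep]
  · have hlip : ε k * (φ (v (t ε)) - φ (v (t (flipSign k ε)))) ≤
        |ε k * (v (t ε) - v (t (flipSign k ε)))| := by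
      refine (le_abs_self _).trans ?_
      rw [abs_mul, abs_mul]
      exact mul_le_mul_of_nonneg_left (by simpa [Real.dist_eq] using hφ.dist_le_mul _ _)
        (abs_nonneg _)
    rcases abs_choice ((ε k : ℝ) * (v (t ε) - v (t (flipSign k ε)))) with h | h <;>
      linarith [not_le.1 hkeep]

lemma exists_expect_rademacherSum_lipschitz_le {φ : ι → ℝ → ℝ} (hφ : ∀ i, LipschitzWith 1 (φ i))
    (v : ι → T → ℝ) (t : (ι → ℤˣ) → T) :
    ∃ t' : (ι → ℤˣ) → T, 𝔼 ε, rademacherSum ε (fun i => φ i (v i (t ε))) ≤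
      𝔼 ε, rademacherSum ε (fun i => v i (t' ε)) := by
  suffices partialContraction : ∀ s : Finset ι, ∃ t' : (ι → ℤˣ) → T,
      𝔼 ε, rademacherSum ε (fun i => φ i (v i (t ε))) ≤
        𝔼 ε, rademacherSum ε fun i => if i ∈ s then v i (t' ε) else φ i (v i (t' ε)) by
    simpa using partialContraction univ
  intro s
  induction s using Finset.induction_on with
  | empty => exact ⟨t, by simp⟩
  | insert k s hk ih =>
    obtain ⟨t₁, ht₁⟩ := ih
    let H (ε : ι → ℤˣ) (y : T) : ℝ :=
      ∑ i ∈ univ.erase k, ε i * if i ∈ s then v i y else φ i (v i y)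
    have hH (ε y) : H (flipSign k ε) y = H ε y :=
      sum_congr rfl fun i hi => by rw [flipSign, update_of_ne (ne_of_mem_erase hi)]
    obtain ⟨t₂, ht₂⟩ := exists_expect_coord_lipschitz_le k hH (hφ k) (v k) t₁
    refine ⟨t₂, ht₁.trans (le_of_eq_of_le ?_ (ht₂.trans_eq ?_))⟩
    · refine expect_congr rfl fun ε _ => ?_
      rw [rademacherSum, ← sum_erase_add _ _ (mem_univ k), if_neg hk]
    · refine expect_congr rfl fun ε _ => ?_
      rw [rademacherSum, ← sum_erase_add _ _ (mem_univ k), if_pos (mem_insert_self k s)]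
      congr 1
      refine sum_congr rfl fun i hi => ?_
      simp only [mem_insert, ne_of_mem_erase hi, false_or]

end Contraction

section Symmetrization

variable {ι R T : Type*}

/-- Exchanges the `i`-th entries of two tuples wherever `ε i = -1`. Exchangeability of
independent copies under this map is what drives symmetrization. -/
def signedSwap (ε : ι → ℤˣ) (x : (ι → R) × (ι → R)) : (ι → R) × (ι → R) :=
  (fun i => if ε i = 1 then x.1 i else x.2 i, fun i => if ε i = 1 then x.2 i else x.1 i)

lemma signedSwap_involutive (ε : ι → ℤˣ) : Involutive (signedSwap (R := R) ε) := by
  intro x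
  ext i <;> by_cases h : ε i = 1 <;> simp [signedSwap, h]

lemma sub_comp_signedSwap (ε : ι → ℤˣ) (x : (ι → R) × (ι → R)) (G : R → ℝ) (i : ι) :
    G ((signedSwap ε x).2 i) - G ((signedSwap ε x).1 i) = ε i * (G (x.2 i) - G (x.1 i)) := by
  rcases Int.units_eq_one_or (ε i) with h | h <;> simp [signedSwap, h]

variable [Fintype ι] [DecidableEq ι] [Fintype R]

lemma expect_sum_sub_le_of_expect_rademacherSum_le {g : R → T → ℝ} {Z : ℝ}
    (hZ : ∀ (a : ι → R) (t : (ι → ℤˣ) → T), 𝔼 ε, rademacherSum ε (fun i => g (a i) (t ε)) ≤ Z)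
    [Nonempty R] (u : (ι → R) → T) :
    𝔼 a, 𝔼 a' : ι → R, ∑ i, (g (a' i) (u a) - g (a i) (u a)) ≤ 2 * Z := by
  let F (x : (ι → R) × (ι → R)) : ℝ := ∑ i, (g (x.2 i) (u x.1) - g (x.1 i) (u x.1))
  have F_swap (ε x) : F (signedSwap ε x) =
      rademacherSum ε (fun i => g (x.2 i) (u (signedSwap ε x).1)) +
        rademacherSum (-ε) fun i => g (x.1 i) (u (signedSwap ε x).1) := by
    simp only [F, rademacherSum, ← sum_add_distrib]
    refine sum_congr rfl fun i _ => ?_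
    rw [sub_comp_signedSwap ε x fun r => g r (u (signedSwap ε x).1)]
    push_cast [Pi.neg_apply]
    ring
  have expect_F_swap (x) : 𝔼 ε, F (signedSwap ε x) ≤ 2 * Z := by
    simp only [F_swap, expect_add_distrib, two_mul]
    refine add_le_add (hZ x.2 _) ?_
    rw [← Fintype.expect_equiv (Equiv.neg (ι → ℤˣ)) _ _ fun ε => rfl]
    simpa using hZ x.1 fun ε => u (signedSwap (-ε) x).1
  calc 𝔼 a, 𝔼 a' : ι → R, ∑ i, (g (a' i) (u a) - g (a i) (u a))
      = 𝔼 x, F x := (expect_product univ univ F).symm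
    _ = 𝔼 ε : ι → ℤˣ, 𝔼 x, F (signedSwap ε x) := by
        rw [← Fintype.expect_const (ι := ι → ℤˣ) (𝔼 x, F x)]
        refine expect_congr rfl fun ε _ => ?_
        exact (Fintype.expect_equiv (signedSwap_involutive ε).toPerm _ _ fun x => rfl).symm
    _ = 𝔼 x, 𝔼 ε : ι → ℤˣ, F (signedSwap ε x) := expect_comm ..
    _ ≤ 2 * Z := expect_le univ_nonempty fun x _ => expect_F_swap x

end Symmetrization

section SignMatrix

variable {ι κ : Type*} [Fintype κ]

/-- The image in `ℝ^κ` of the unit ball of `ℓ_{q*}` under the diagonal operator with entries `τ`,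
encoded by its support function `b ↦ ‖b * τ‖_q`. -/
def diagonalBall (q : ℝ) (τ : κ → ℝ) : Set (κ → ℝ) :=
  {y | ∀ b : κ → ℝ, ∑ j, b j * y j ≤ (∑ j, |b j * τ j| ^ q) ^ q⁻¹}

variable {q : ℝ} {τ y : κ → ℝ}

lemma sqrt_sum_sq_le_of_mem_diagonalBall (hq : 0 ≤ q) (hy : y ∈ diagonalBall q τ) :
    √(∑ j, y j ^ 2) ≤ (∑ j, |τ j| ^ q) ^ q⁻¹ := by
  have abs_sign_le (x : ℝ) : |(SignType.sign x : ℝ)| ≤ 1 := by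
    rcases SignType.sign x with _ | _ | _ <;> simp
  calc √(∑ j, y j ^ 2) ≤ ∑ j, |y j| := by
        refine Real.sqrt_le_iff.2 ⟨sum_nonneg fun j _ => abs_nonneg _, ?_⟩
        simpa only [sq_abs] using
          sum_sq_le_sq_sum_of_nonneg fun j (_ : j ∈ univ) => abs_nonneg (y j)
    _ = ∑ j, SignType.sign (y j) * y j := by simp only [sign_mul_self]
    _ ≤ (∑ j, |SignType.sign (y j) * τ j| ^ q) ^ q⁻¹ := hy _
    _ ≤ (∑ j, |τ j| ^ q) ^ q⁻¹ := by
        have hle (j) : |SignType.sign (y j) * τ j| ≤ |τ j| := by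
          rw [abs_mul]
          exact mul_le_of_le_one_left (abs_nonneg _) (abs_sign_le _)
        gcongr (∑ j, ?_ ^ q) ^ q⁻¹
        exact hle _

variable [Fintype ι]

section Expectation

variable [DecidableEq ι]

lemma expect_rpow_inv_sum_rademacherSum_le (hq : 1 ≤ q) {Q : ℝ} {A : κ → ι → ℝ}
    (hA : ∀ j, ∑ i, A j i ^ 2 ≤ Q) (τ : κ → ℝ) :
    𝔼 ε, (∑ j, |rademacherSum ε (A j) * τ j| ^ q) ^ q⁻¹ ≤
      2 * √(Real.exp 1 * q * Q) * (∑ j, |τ j| ^ q) ^ q⁻¹ := by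
  have hq0 : 0 < q := zero_lt_one.trans_le hq
  have hM : 0 ≤ 2 * √(Real.exp 1 * q * Q) := by positivity
  calc 𝔼 ε, (∑ j, |rademacherSum ε (A j) * τ j| ^ q) ^ q⁻¹
      ≤ (𝔼 ε, ∑ j, |rademacherSum ε (A j) * τ j| ^ q) ^ q⁻¹ :=
        expect_rpow_inv_le hq fun ε => sum_nonneg fun j _ => Real.rpow_nonneg (abs_nonneg _) _
    _ = (∑ j, (𝔼 ε, |rademacherSum ε (A j)| ^ q) * |τ j| ^ q) ^ q⁻¹ := by
        simp only [expect_sum_comm, abs_mul, Real.mul_rpow (abs_nonneg _) (abs_nonneg _),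
          expect_mul]
    _ ≤ (∑ j, (2 * √(Real.exp 1 * q * Q)) ^ q * |τ j| ^ q) ^ q⁻¹ := by
        gcongr with j
        exact (expect_abs_rademacherSum_rpow_le hq (A j)).trans (by gcongr; exact hA j)
    _ = 2 * √(Real.exp 1 * q * Q) * (∑ j, |τ j| ^ q) ^ q⁻¹ := by
        rw [← mul_sum, Real.mul_rpow (by positivity) (by positivity),
          Real.rpow_rpow_inv hM hq0.ne']

lemma expect_rademacherSum_abs_rademacherSum_le (hq : 1 ≤ q) (a : ι → κ → ℤˣ)
    (t : (ι → ℤˣ) → diagonalBall q τ) :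
    𝔼 ε, rademacherSum ε (fun i => |rademacherSum (a i) (t ε)|) ≤
      2 * √(Real.exp 1 * q * Fintype.card ι) * (∑ j, |τ j| ^ q) ^ q⁻¹ := by
  obtain ⟨t', ht'⟩ := exists_expect_rademacherSum_lipschitz_le (φ := fun _ : ι => abs)
    (fun _ => lipschitzWith_one_norm) (fun i (y : diagonalBall q τ) => rademacherSum (a i) y) t
  have exchange (ε : ι → ℤˣ) (y : κ → ℝ) : rademacherSum ε (fun i => rademacherSum (a i) y) =
      ∑ j, rademacherSum ε (fun i => a i j) * y j := by
    simp only [rademacherSum, mul_sum, sum_mul, mul_assoc]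
    exact sum_comm
  calc _ ≤ 𝔼 ε, rademacherSum ε (fun i => rademacherSum (a i) (t' ε)) := ht'
    _ ≤ 𝔼 ε, (∑ j, |rademacherSum ε (fun i => a i j) * τ j| ^ q) ^ q⁻¹ := by
        refine expect_le_expect fun ε _ => ?_
        rw [exchange]
        exact (t' ε).2 _
    _ ≤ _ := expect_rpow_inv_sum_rademacherSum_le hq (fun j => by simp [units_int_cast_sq]) τ

variable [DecidableEq κ]

lemma card_mul_sqrt_sum_sq_le_expect (y : κ → ℝ) :
    Fintype.card ι * √(∑ j, y j ^ 2) ≤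
      Real.exp (1 / 2) * 𝔼 a : ι → κ → ℤˣ, ∑ i, |rademacherSum (a i) y| := by
  have hrow (i : ι) : 𝔼 a : ι → κ → ℤˣ, |rademacherSum (a i) y| = 𝔼 ε, |rademacherSum ε y| :=
    expect_pi_apply i fun ε => |rademacherSum ε y|
  rw [expect_sum_comm]
  simp only [hrow, sum_const, card_univ, nsmul_eq_mul]
  rw [mul_left_comm]
  gcongr
  exact sqrt_sum_sq_le_expect_abs_rademacherSum y

lemma expect_sum_abs_rademacherSum_sub_le (hq : 1 ≤ q) (u : (ι → κ → ℤˣ) → diagonalBall q τ) :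
    𝔼 a, 𝔼 a' : ι → κ → ℤˣ,
        ∑ i, (|rademacherSum (a' i) (u a)| - |rademacherSum (a i) (u a)|) ≤
      4 * √(Real.exp 1 * q * Fintype.card ι) * (∑ j, |τ j| ^ q) ^ q⁻¹ := by
  have h := expect_sum_sub_le_of_expect_rademacherSum_le
    (g := fun (r : κ → ℤˣ) (y : diagonalBall q τ) => |rademacherSum r y|)
    (fun a t => expect_rademacherSum_abs_rademacherSum_le hq a t) u
  exact h.trans_eq (by ring)

end Expectation

lemma exists_sign_matrix_card_mul_sqrt_sum_sq_le (hq : 1 ≤ q) (τ : κ → ℝ) :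
    ∃ a : ι → κ → ℤˣ, ∀ y ∈ diagonalBall q τ,
      Fintype.card ι * √(∑ j, y j ^ 2) ≤ Real.exp (1 / 2) * (∑ i, |rademacherSum (a i) y| +
        4 * √(Real.exp 1 * q * Fintype.card ι) * (∑ j, |τ j| ^ q) ^ q⁻¹) := by
  classical
  by_contra! hbad
  choose y hmem hlt using hbad
  obtain ⟨a, -, hdev⟩ := exists_le_of_expect_le univ_nonempty
    (expect_sum_abs_rademacherSum_sub_le hq fun a => ⟨y a, hmem a⟩)
  simp only [sum_sub_distrib, expect_sub_distrib, Fintype.expect_const] at hdev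
  have h := lt_of_mul_lt_mul_left ((hlt a).trans_le (card_mul_sqrt_sum_sq_le_expect (y a)))
    (Real.exp_pos _).le
  linarith

lemma exists_sign_matrix_sqrt_sum_sq_le_of_ker [Nonempty ι] (hq : 1 ≤ q) (τ : κ → ℝ) :
    ∃ a : ι → κ → ℤˣ, ∀ y ∈ diagonalBall q τ, (∀ i, rademacherSum (a i) y = 0) →
      √(∑ j, y j ^ 2) ≤
        4 * Real.exp 1 * √(q / Fintype.card ι) * (∑ j, |τ j| ^ q) ^ q⁻¹ := by
  obtain ⟨a, ha⟩ := exists_sign_matrix_card_mul_sqrt_sum_sq_le (ι := ι) hq τ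
  refine ⟨a, fun y hy hker => ?_⟩
  have hm : (0 : ℝ) < Fintype.card ι := by exact_mod_cast Fintype.card_pos
  have hscale : Real.exp (1 / 2) * √(Real.exp 1 * q * Fintype.card ι) =
      Fintype.card ι * (Real.exp 1 * √(q / Fintype.card ι)) := by
    refine (sq_eq_sq₀ (by positivity) (by positivity)).1 ?_
    rw [mul_pow, mul_pow, mul_pow, Real.sq_sqrt (by positivity), Real.sq_sqrt (by positivity),
      ← Real.exp_nat_mul]
    field_simp
    norm_num
  have h := ha y hy
  simp only [hker, abs_zero, sum_const_zero, zero_add] at h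
  refine le_of_mul_le_mul_left (h.trans_eq ?_) hm
  linear_combination (4 * (∑ j, |τ j| ^ q) ^ q⁻¹) * hscale

end SignMatrix

section DiagonalOperator

variable {p : ℝ≥0∞}

lemma pstar_top : pstar ⊤ = 1 := by simp [pstar]

lemma pstar_holderConjugate_toReal (hp : 1 < p) (htop : p ≠ ⊤) :
    (pstar p).HolderConjugate p.toReal := by
  have h1 : 1 < p.toReal := by simpa using (ENNReal.toReal_lt_toReal ENNReal.one_ne_top htop).2 hp
  exact (Real.holderConjugate_iff.2 ⟨h1, by simp [pstar]⟩).symm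

lemma one_le_pstar (hp : 1 < p) : 1 ≤ pstar p := by
  rcases eq_or_ne p ⊤ with rfl | htop
  · exact pstar_top.ge
  · exact (pstar_holderConjugate_toReal hp htop).lt.le

variable {α β : Type*} {x : lp (fun _ : α => ℝ) p}

lemma sum_mul_lp_apply_le (hp : 1 < p) (hx : ‖x‖ ≤ 1) [Fintype β] (φ : β ↪ α) (b : β → ℝ) :
    ∑ j, b j * x (φ j) ≤ (∑ j, |b j| ^ pstar p) ^ (pstar p)⁻¹ := by
  rcases eq_or_ne p ⊤ with rfl | htop
  · simp only [pstar_top, Real.rpow_one, inv_one]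
    refine sum_le_sum fun j _ => (le_abs_self _).trans ?_
    rw [abs_mul]
    exact mul_le_of_le_one_right (abs_nonneg _)
      ((lp.norm_apply_le_norm ENNReal.top_ne_zero x (φ j)).trans hx)
  · have hconj := pstar_holderConjugate_toReal hp htop
    have hle : ∑ j, |x (φ j)| ^ p.toReal ≤ 1 := by
      have h := lp.sum_rpow_le_norm_rpow hconj.symm.pos x (univ.map φ)
      rw [sum_map] at h
      exact h.trans (Real.rpow_le_one (lp.norm_nonneg' x) hx hconj.symm.nonneg)
    calc ∑ j, b j * x (φ j)
        ≤ (∑ j, |b j| ^ pstar p) ^ (1 / pstar p) *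
            (∑ j, |x (φ j)| ^ p.toReal) ^ (1 / p.toReal) :=
          Real.inner_le_Lp_mul_Lq univ b (fun j => x (φ j)) hconj
      _ ≤ (∑ j, |b j| ^ pstar p) ^ (1 / pstar p) :=
          mul_le_of_le_one_right (by positivity)
            (Real.rpow_le_one (by positivity) hle (by positivity))
      _ = _ := by rw [one_div]

lemma mul_apply_mem_diagonalBall (hp : 1 < p) (hx : ‖x‖ ≤ 1) [Fintype β] (φ : β ↪ α)
    (σ : α → ℝ) :
    (fun j => σ (φ j) * x (φ j)) ∈ diagonalBall (pstar p) fun j => σ (φ j) := fun b => by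
  simpa only [mul_assoc] using sum_mul_lp_apply_le hp hx φ fun j => b j * σ (φ j)

lemma sum_sq_mul_apply_le (hp : 1 < p) (hx : ‖x‖ ≤ 1) (φ : β ↪ α) {σ : α → ℝ}
    (hσ : Summable fun j => |σ (φ j)| ^ pstar p) (s : Finset β) :
    ∑ j ∈ s, (σ (φ j) * x (φ j)) ^ 2 ≤ ((∑' j, |σ (φ j)| ^ pstar p) ^ (pstar p)⁻¹) ^ 2 := by
  have hq : 0 ≤ pstar p := zero_le_one.trans (one_le_pstar hp)
  have hnonneg (j : β) : 0 ≤ |σ (φ j)| ^ pstar p := by positivity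
  have h := sqrt_sum_sq_le_of_mem_diagonalBall hq
    (mul_apply_mem_diagonalBall hp hx ((Embedding.subtype (· ∈ s)).trans φ) σ)
  rw [← Real.sqrt_le_left (Real.rpow_nonneg (tsum_nonneg hnonneg) _)]
  simp only [Embedding.trans_apply, Embedding.subtype_apply] at h
  rw [sum_coe_sort s fun j => (σ (φ j) * x (φ j)) ^ 2,
    sum_coe_sort s fun j => |σ (φ j)| ^ pstar p] at h
  exact h.trans (Real.rpow_le_rpow (sum_nonneg fun j _ => hnonneg j)
    (hσ.sum_le_tsum s fun j _ => hnonneg j) (inv_nonneg.2 hq))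

lemma summable_sq_mul_apply (hp : 1 < p) (hx : ‖x‖ ≤ 1) (φ : β ↪ α) {σ : α → ℝ}
    (hσ : Summable fun j => |σ (φ j)| ^ pstar p) :
    Summable fun j => (σ (φ j) * x (φ j)) ^ 2 :=
  summable_of_sum_le (fun _ => sq_nonneg _) (sum_sq_mul_apply_le hp hx φ hσ)

lemma sqrt_tsum_sq_mul_apply_le (hp : 1 < p) (hx : ‖x‖ ≤ 1) (φ : β ↪ α) {σ : α → ℝ}
    (hσ : Summable fun j => |σ (φ j)| ^ pstar p) :
    √(∑' j, (σ (φ j) * x (φ j)) ^ 2) ≤ (∑' j, |σ (φ j)| ^ pstar p) ^ (pstar p)⁻¹ :=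
  Real.sqrt_le_iff.2 ⟨Real.rpow_nonneg (tsum_nonneg fun _ => by positivity) _,
    Real.tsum_le_of_sum_le (fun _ => sq_nonneg _) (sum_sq_mul_apply_le hp hx φ hσ)⟩

end DiagonalOperator

section Gelfand

lemma sqrt_tsum_sq_le_sqrt_sum_add_sqrt_tsum {y : ℕ → ℝ} (hy : Summable fun j => y j ^ 2)
    {K : ℕ} (hzero : ∀ i < K, y i = 0) (N : ℕ) :
    √(∑' j, y j ^ 2) ≤ √(∑ j : Fin N, y (j + K) ^ 2) + √(∑' j, y (j + (N + K)) ^ 2) := by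
  have hhead : ∑ j ∈ range (N + K), y j ^ 2 = ∑ j : Fin N, y (j + K) ^ 2 := by
    rw [add_comm N, sum_range_add, sum_eq_zero fun j hj => by simp [hzero j (mem_range.1 hj)],
      zero_add, ← Fin.sum_univ_eq_sum_range fun j => y (K + j) ^ 2]
    simp only [add_comm K]
  rw [← hy.sum_add_tsum_nat_add (N + K), hhead]
  simpa only [Real.sqrt_eq_rpow] using Real.rpow_add_le_add_rpow
    (sum_nonneg fun _ _ => sq_nonneg _) (tsum_nonneg fun _ => sq_nonneg _) (by norm_num)
    (by norm_num)

lemma exists_tsum_nat_add_rpow_inv_lt (f : ℕ → ℝ) (hf : ∀ j, 0 ≤ f j) {q η : ℝ} (hq : 0 < q)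
    (hη : 0 < η) (K : ℕ) : ∃ N, (∑' j, f (j + (N + K))) ^ q⁻¹ < η := by
  have hlim := (tendsto_sum_nat_add f).comp (Filter.tendsto_add_atTop_nat K)
  obtain ⟨N, hN⟩ := (hlim.eventually (gt_mem_nhds (Real.rpow_pos_of_pos hη q))).exists
  exact ⟨N, (Real.rpow_inv_lt_iff_of_pos (tsum_nonneg fun _ => hf _) hη.le hq).2 hN⟩

variable {p : ℝ≥0∞} {σ : ℕ → ℝ}

lemma gelfandSeq_le_of_ker [Fact (1 ≤ p)] {ι : Type*} [Fintype ι] {n : ℕ}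
    (hn : Fintype.card ι = n - 1)
    (f : lp (fun _ : ℕ => ℝ) p →L[ℝ] (ι → ℝ)) {t : ℝ} (ht : 0 ≤ t)
    (hf : ∀ x, ‖x‖ ≤ 1 → f x = 0 → √(∑' j, (σ j * x j) ^ 2) ≤ t) :
    gelfandSeq p σ n ≤ t := by
  let e : (ι → ℝ) ≃L[ℝ] (Fin (n - 1) → ℝ) :=
    ContinuousLinearEquiv.piCongrLeft ℝ (fun _ => ℝ) (Fintype.equivFinOfCardEq hn)
  let g : lp (fun _ : ℕ => ℝ) p →L[ℝ] (Fin (n - 1) → ℝ) := e ∘L f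
  refine csInf_le_of_le ⟨0, ?_⟩ ⟨g, fun x hx => ?_, rfl⟩ (Real.sSup_le ?_ ht)
  · rintro _ ⟨_, _, rfl⟩
    refine Real.sSup_nonneg ?_
    rintro _ ⟨x, _, rfl⟩
    exact Real.sqrt_nonneg _
  · refine g.isClosed_ker.closure_subset (Metric.mem_closure_iff.2 fun ε hε => ?_)
    obtain ⟨y, hy, hxy⟩ := hx ε hε
    exact ⟨y, hy, by rwa [dist_eq_norm]⟩
  · rintro _ ⟨x, ⟨hx, hgx⟩, rfl⟩
    exact hf x hx (e.map_eq_zero_iff.1 hgx)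

lemma exists_clm_sqrt_tsum_sq_le_of_ker [Fact (1 ≤ p)] (hp : 1 < p)
    (hσ : Summable fun j => |σ j| ^ pstar p) (K : ℕ) (ι : Type*) [Fintype ι] [Nonempty ι]
    {η : ℝ} (hη : 0 < η) :
    ∃ f : lp (fun _ : ℕ => ℝ) p →L[ℝ] (Fin K ⊕ ι → ℝ), ∀ x, ‖x‖ ≤ 1 → f x = 0 →
      √(∑' j, (σ j * x j) ^ 2) ≤ 4 * Real.exp 1 * √(pstar p / Fintype.card ι) *
        (∑' j, |σ (j + K)| ^ pstar p) ^ (pstar p)⁻¹ + η := by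
  have hq : 1 ≤ pstar p := one_le_pstar hp
  have hq0 : 0 < pstar p := zero_lt_one.trans_le hq
  have hσ_add (k : ℕ) : Summable fun j => |σ (j + k)| ^ pstar p := (summable_nat_add_iff k).2 hσ
  obtain ⟨N, hN⟩ := exists_tsum_nat_add_rpow_inv_lt (fun j => |σ j| ^ pstar p)
    (fun j => by positivity) hq0 hη K
  obtain ⟨a, ha⟩ := exists_sign_matrix_sqrt_sum_sq_le_of_ker (ι := ι) hq fun j : Fin N => σ (j + K)
  let f : lp (fun _ : ℕ => ℝ) p →L[ℝ] (Fin K ⊕ ι → ℝ) := .pi <| Sum.elim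
    (fun i => lp.evalCLM ℝ _ p (i : ℕ))
    fun i => ∑ j : Fin N, ((a i j : ℝ) * σ (j + K)) • lp.evalCLM ℝ _ p (j + K : ℕ)
  refine ⟨f, fun x hx hfx => ?_⟩
  have hhead (i : ℕ) (hi : i < K) : σ i * x i = 0 := by
    have : x i = 0 := congrFun hfx (.inl ⟨i, hi⟩)
    rw [this, mul_zero]
  have hker (i : ι) : rademacherSum (a i) (fun j : Fin N => σ (j + K) * x (j + K)) = 0 := by
    simpa [f, rademacherSum, mul_assoc, lp.evalCLM] using congrFun hfx (.inr i)
  have hfin : ∑ j : Fin N, |σ (j + K)| ^ pstar p ≤ ∑' j, |σ (j + K)| ^ pstar p := by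
    rw [Fin.sum_univ_eq_sum_range fun j => |σ (j + K)| ^ pstar p]
    exact (hσ_add K).sum_le_tsum _ fun _ _ => by positivity
  refine (sqrt_tsum_sq_le_sqrt_sum_add_sqrt_tsum
    (summable_sq_mul_apply hp hx (.refl ℕ) hσ) hhead N).trans (add_le_add ?_ ?_)
  · refine (ha _ (mul_apply_mem_diagonalBall hp hx
      (Fin.valEmbedding.trans (addRightEmbedding K)) σ) hker).trans ?_
    gcongr
  · exact (sqrt_tsum_sq_mul_apply_le hp hx (addRightEmbedding (N + K)) (hσ_add _)).trans hN.le

lemma gelfandSeq_le_of_sub_one_eq_add (hp : 1 < p) (hσ : Summable fun j => |σ j| ^ pstar p)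
    {n K m : ℕ} (hm : 1 ≤ m) (hn : n - 1 = K + m) :
    gelfandSeq p σ n ≤ 4 * Real.exp 1 * √(pstar p / m) *
      (∑' j, |σ (j + K)| ^ pstar p) ^ (pstar p)⁻¹ := by
  have : Fact (1 ≤ p) := ⟨hp.le⟩
  have : Nonempty (Fin m) := ⟨⟨0, hm⟩⟩
  refine le_of_forall_pos_le_add fun η hη => ?_
  obtain ⟨f, hf⟩ := exists_clm_sqrt_tsum_sq_le_of_ker hp hσ K (Fin m) hη
  rw [Fintype.card_fin] at hf
  exact gelfandSeq_le_of_ker (by simp [hn]) f (by positivity) hf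

lemma gelfandSeq_one_le (hp : 1 < p) (hσ : Summable fun j => |σ j| ^ pstar p) :
    gelfandSeq p σ 1 ≤ (∑' j, |σ j| ^ pstar p) ^ (pstar p)⁻¹ := by
  have : Fact (1 ≤ p) := ⟨hp.le⟩
  exact gelfandSeq_le_of_ker (ι := Fin 0) (by simp) 0 (by positivity) fun x hx _ =>
    sqrt_tsum_sq_mul_apply_le hp hx (.refl ℕ) hσ

lemma gelfandSeq_le_tail (hp : 1 < p) (hσ : Summable fun j => |σ j| ^ pstar p)
    {n : ℕ} (hn : 1 ≤ n) :
    gelfandSeq p σ n ≤ 8 * Real.exp 1 * √(pstar p) * (n : ℝ) ^ (-(1 / 2) : ℝ) *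
      (∑' j, |σ (j + n / 4)| ^ pstar p) ^ (pstar p)⁻¹ := by
  have hq : 1 ≤ pstar p := one_le_pstar hp
  have hn0 : (0 : ℝ) < n := by exact_mod_cast hn
  rcases hn.eq_or_lt with rfl | h1
  · refine (gelfandSeq_one_le hp hσ).trans (le_mul_of_one_le_left (by positivity) ?_)
    have := Real.one_le_sqrt.2 hq
    have := Real.add_one_le_exp 1
    simp only [Nat.cast_one, Real.one_rpow, mul_one]
    nlinarith
  · set m := n - 1 - n / 4
    have hcard : n - 1 = n / 4 + m := by omega
    refine (gelfandSeq_le_of_sub_one_eq_add hp hσ (by omega) hcard).trans ?_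
    have hnm : (n : ℝ) / 4 ≤ m := by
      rw [div_le_iff₀ four_pos]
      exact_mod_cast (by omega : n ≤ m * 4)
    have hsqrt : √(pstar p / m) ≤ 2 * (√(pstar p) * (n : ℝ) ^ (-(1 / 2) : ℝ)) := by
      calc √(pstar p / m) ≤ √(2 ^ 2 * (pstar p / n)) := by
            refine Real.sqrt_le_sqrt ?_
            calc pstar p / m ≤ pstar p / (n / 4) := by gcongr
              _ = _ := by field_simp; norm_num
        _ = _ := by
            rw [Real.sqrt_mul (by norm_num), Real.sqrt_sq two_pos.le, Real.sqrt_div' _ hn0.le,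
              Real.rpow_neg hn0.le, ← Real.sqrt_eq_rpow, div_eq_mul_inv]
    gcongr ?_ * _
    linarith [mul_le_mul_of_nonneg_left hsqrt (by positivity : 0 ≤ 4 * Real.exp 1)]

lemma rpow_half_mul_gelfandSeq_le (hp : 1 < p) (hσ : Summable fun j => |σ j| ^ pstar p)
    {n : ℕ} (hn : 1 ≤ n) :
    (n : ℝ) ^ (1 / 2 : ℝ) * gelfandSeq p σ n ≤
      8 * Real.exp 1 * √(pstar p) * (∑' j, |σ j| ^ pstar p) ^ (pstar p)⁻¹ := by
  have hq : 1 ≤ pstar p := one_le_pstar hp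
  have hn0 : (0 : ℝ) < n := by exact_mod_cast hn
  have htail : ∑' j, |σ (j + n / 4)| ^ pstar p ≤ ∑' j, |σ j| ^ pstar p :=
    tsum_comp_le_tsum_of_inj hσ (fun j => by positivity) (add_left_injective (n / 4))
  have hpow : (n : ℝ) ^ (1 / 2 : ℝ) * (n : ℝ) ^ (-(1 / 2) : ℝ) = 1 := by
    rw [← Real.rpow_add hn0, add_neg_cancel, Real.rpow_zero]
  calc (n : ℝ) ^ (1 / 2 : ℝ) * gelfandSeq p σ n
      ≤ (n : ℝ) ^ (1 / 2 : ℝ) * (8 * Real.exp 1 * √(pstar p) * (n : ℝ) ^ (-(1 / 2) : ℝ) *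
          (∑' j, |σ j| ^ pstar p) ^ (pstar p)⁻¹) := by
        gcongr
        exact (gelfandSeq_le_tail hp hσ hn).trans (by gcongr)
    _ = _ := by
        linear_combination
          (8 * Real.exp 1 * √(pstar p) * (∑' j, |σ j| ^ pstar p) ^ (pstar p)⁻¹) * hpow

lemma tsum_nat_add_le_tsum_ite {f : ℕ → ℝ} (hf : ∀ j, 0 ≤ f j) (hsum : Summable f) {k K : ℕ}
    (hk : k ≤ K + 1) : ∑' j, f (j + K) ≤ ∑' j, if k ≤ j + 1 then f j else 0 := by
  have hite : Summable fun j => if k ≤ j + 1 then f j else 0 :=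
    (hsum.indicator {j | k ≤ j + 1}).congr fun j => by simp [Set.indicator_apply]
  calc ∑' j, f (j + K) = ∑' j, if k ≤ j + K + 1 then f (j + K) else 0 :=
        tsum_congr fun j => (if_pos (by omega)).symm
    _ ≤ _ := tsum_comp_le_tsum_of_inj hite (fun j => by split_ifs <;> simp [hf])
        (add_left_injective K)

lemma max_one_ceil_le {q : ℝ} (hq : 1 ≤ q) (n : ℕ) :
    max 1 ⌈1 / 4 * (n : ℝ) / q⌉₊ ≤ n / 4 + 1 := by
  refine max_le (by omega) (Nat.ceil_le.2 ((div_le_self (by positivity) hq).trans ?_))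
  have : (n : ℝ) ≤ 4 * (n / 4 + 1 : ℕ) := by exact_mod_cast (by omega : n ≤ 4 * (n / 4 + 1))
  linarith

end Gelfand

end

theorem statement14_general :
    ∃ C c : ℝ, 0 < C ∧ 0 < c ∧
      ∀ (p : ℝ≥0∞), 1 < p → ∀ σ : ℕ → ℝ, Summable (fun j => |σ j| ^ pstar p) →
      (∀ n : ℕ, 1 ≤ n →
          gelfandSeq p σ n ≤
            C * Real.sqrt (pstar p) * (n : ℝ) ^ (-(1 / 2 : ℝ)) *
              (∑' j : ℕ, if max 1 ⌈c * n / pstar p⌉₊ ≤ j + 1 then |σ j| ^ pstar p else 0) ^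
                (1 / pstar p)) ∧
        ∃ B : ℝ, ∀ n : ℕ, 1 ≤ n → (n : ℝ) ^ ((1 : ℝ) / 2) * gelfandSeq p σ n ≤ B := by
  refine ⟨8 * Real.exp 1, 1 / 4, by positivity, by norm_num, fun p hp σ hσ =>
    ⟨fun n hn => ?_, _, fun n hn => rpow_half_mul_gelfandSeq_le hp hσ hn⟩⟩
  have hq : 1 ≤ pstar p := one_le_pstar hp
  have htail := tsum_nat_add_le_tsum_ite (f := fun j => |σ j| ^ pstar p) (fun j => by positivity) hσ
    (max_one_ceil_le hq n)
  refine (gelfandSeq_le_tail hp hσ hn).trans ?_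
  rw [one_div (pstar p)]
  gcongr

/-- For `1 < p ≤ ∞` and a non-increasing non-negative sequence
`σ ∈ ℓ_{p*}` (0-indexed: `σ (j-1)` is the paper's `σ_j`), the Gelfand numbers of
`D_σ : ℓ_p → ℓ₂` satisfy
`c_n(D_σ) ≤ C √(p*) n^{-1/2} (∑_{j=k}^∞ σ_j^{p*})^{1/p*}` with `k = max(1, ⌈c n / p*⌉)`;
in particular `sup_n n^{1/2} c_n(D_σ) < ∞`, i.e. `(c_n(D_σ)) ∈ ℓ_{2,∞}`. -/
theorem statement14 :
    ∃ C c : ℝ, 0 < C ∧ 0 < c ∧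
      ∀ (p : ℝ≥0∞), 1 < p →
      ∀ σ : ℕ → ℝ, (∀ j, 0 ≤ σ j) → (∀ i j : ℕ, i ≤ j → σ j ≤ σ i) →
      Summable (fun j => σ j ^ pstar p) →
      (∀ n : ℕ, 1 ≤ n →
          gelfandSeq p σ n ≤
            C * Real.sqrt (pstar p) * (n : ℝ) ^ (-(1 / 2 : ℝ)) *
              (∑' j : ℕ, if max 1 ⌈c * n / pstar p⌉₊ ≤ j + 1 then σ j ^ pstar p else 0) ^
                (1 / pstar p)) ∧
        ∃ B : ℝ, ∀ n : ℕ, 1 ≤ n → (n : ℝ) ^ ((1 : ℝ) / 2) * gelfandSeq p σ n ≤ B := by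
  obtain ⟨C, c, hC, hc, hgen⟩ := statement14_general
  exact ⟨C, c, hC, hc, fun p hp σ hσ _ => by simpa only [abs_of_nonneg (hσ _)] using hgen p hp σ⟩
end

section
/- Let 0 < p ≤ 1, p < q ≤ 2, and λ > 0, and set σ_j = j^{−λ} for j ∈ ℕ. There exist constants D, K ∈ (0,∞), with K depending only on p, q and λ, such that for all m ∈ ℕ and all 1 ≤ n < m satisfying n ≥ D·log(e·m/n), the Gelfand numbers of the diagonal operator D_σ : ℓ_p^m → ℓ_q^m satisfy c_n(D_σ : ℓ_p^m → ℓ_q^m) ≤ K·(log(e·m/n)/n)^{λ + 1/p − 1/q}. -/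
open scoped ENNReal NNReal

/-- The `ℓ_p`-(quasi-)norm on `ℝ^m`, for `0 < p ≤ ∞`. -/
noncomputable def lpnorm (p : ℝ≥0∞) {m : ℕ} (x : Fin m → ℝ) : ℝ :=
  if p = ∞ then ⨆ j, |x j| else (∑ j, |x j| ^ p.toReal) ^ (1 / p.toReal)

/-- The `n`-th Gelfand number of the diagonal operator `D_σ : ℓ_p^m → ℓ_q^m`:
the infimum over all linear subspaces `E ⊆ ℝ^m` of codimension at most `n - 1` of
`sup {‖D_σ x‖_q : x ∈ B_p^m ∩ E}`. -/
noncomputable def gelfandFin (p q : ℝ≥0∞) {m : ℕ} (σ : Fin m → ℝ) (n : ℕ) : ℝ :=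
  sInf { t | ∃ E : Submodule ℝ (Fin m → ℝ),
      Module.finrank ℝ ((Fin m → ℝ) ⧸ E) ≤ n - 1 ∧
      t = sSup ((fun x => lpnorm q (fun j => σ j * x j)) ''
        {x : Fin m → ℝ | lpnorm p x ≤ 1 ∧ x ∈ E}) }

/-!
Let `A` be a random sign matrix with `N` rows. By Chernoff bounds and a union bound over the
integer vectors with `‖z‖₁ ≤ t`, some `A` satisfies `N / 32 * ‖z‖₂ ≤ ‖A z‖₁ ≤ 2 * N * ‖z‖₂` for
all of them as soon as `N` exceeds a multiple of `t * log (e * m / t)`. If `A x = 0` and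
`‖x‖₁ ≤ t`, round `x` towards zero to an integer vector `z`. Then `‖A z‖₁ = ‖A (x - z)‖₁`, and
since a seminorm on `{f | ‖f‖_∞ ≤ 1, ‖f‖₁ ≤ t}` is maximized at an integer point, this is at most
`2 * N * √t`. Hence `‖z‖₂`, and with it `‖x‖₂`, is `O(√t)`; by homogeneity `‖x‖₂ = O(‖x‖₁ / √t)`
on the kernel of `A`, and Hölder interpolation between `ℓ_p` and `ℓ₂` gives
`‖x‖_q = O(t ^ (1 / q - 1 / p))` for `x` in the unit ball of `ℓ_p`. Requiring moreover that the
first `t` coordinates of `x` vanish makes the weights `σ` contribute the factor `t ^ (-λ)`, and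
one takes `t` of order `n / log (e * m / n)`.
-/

open Finset Real WithLp
open scoped BigOperators

theorem cos_le_exp_neg_sq_div_three {x : ℝ} (hx : |x| ≤ 1) : cos x ≤ exp (-(x ^ 2 / 3)) := by
  have htaylor := (abs_le.1 (cos_bound hx)).2
  have hpow : |x| ^ 4 ≤ x ^ 2 := by
    rw [← sq_abs x]
    exact pow_le_pow_of_le_one (abs_nonneg x) hx (by norm_num)
  linarith [add_one_le_exp (-(x ^ 2 / 3)), sq_nonneg x]

theorem exp_neg_le_three_add_cos_div_four {u : ℝ} (hu : 0 ≤ u) : exp (-u) ≤ (3 + cos u) / 4 := by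
  have hinv : exp (-u) ≤ 1 / (1 + u) := by
    rw [exp_neg, ← one_div]
    exact one_div_le_one_div_of_le (by linarith) (by linarith [add_one_le_exp u])
  refine hinv.trans ?_
  rw [div_le_iff₀ (by linarith)]
  rcases le_total u 1 with h | h
  · nlinarith [one_sub_sq_div_two_le_cos (x := u)]
  · nlinarith [neg_one_le_cos u]

section Chernoff

variable {ι : Type*} [Fintype ι] [DecidableEq ι]

theorem expect_prod_apply {κ : ι → Type*} [∀ i, Fintype (κ i)] {K : Type*} [Field K] [CharZero K]
    (f : ∀ i, κ i → K) : 𝔼 ω : (∀ i, κ i), ∏ i, f i (ω i) = ∏ i, 𝔼 a, f i a := by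
  simp_rw [Fintype.expect_eq_sum_div_card, prod_div_distrib, Fintype.prod_sum, Fintype.card_pi,
    Nat.cast_prod]

theorem dens_le_sum_apply_le {Ω : Type*} [Fintype Ω] (g : Ω → ℝ) (T : ℝ) :
    (dens {A : ι → Ω | T ≤ ∑ i, g (A i)} : ℝ) ≤
      exp (-T) * (𝔼 ω, exp (g ω)) ^ Fintype.card ι := by
  calc (dens {A : ι → Ω | T ≤ ∑ i, g (A i)} : ℝ)
      = 𝔼 A : ι → Ω, if T ≤ ∑ i, g (A i) then 1 else 0 := by
        rw [nnratCast_dens, Fintype.expect_eq_sum_div_card, sum_boole]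
    _ ≤ 𝔼 A : ι → Ω, exp (-T) * ∏ i, exp (g (A i)) := by
        refine expect_le_expect fun A _ ↦ ?_
        rw [← exp_sum, ← exp_add]
        split_ifs with hA
        · exact one_le_exp (by linarith)
        · positivity
    _ = exp (-T) * (𝔼 ω, exp (g ω)) ^ Fintype.card ι := by
        rw [← mul_expect, expect_prod_apply (fun _ ω ↦ exp (g ω)), prod_const, card_univ]

end Chernoff

section SignForm

variable {ι κ : Type*} [Fintype ι] [Fintype κ]

/-- The linear functional `x ↦ ∑ j, ω j * x j` of a sign vector `ω`. -/
def signForm (ω : ι → ℤˣ) : Module.Dual ℝ (ι → ℝ) :=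
  ∑ j, ((ω j : ℤ) : ℝ) • LinearMap.proj j

theorem signForm_apply (ω : ι → ℤˣ) (x : ι → ℝ) : signForm ω x = ∑ j, ((ω j : ℤ) : ℝ) * x j := by
  simp [signForm]

/-- The seminorm `x ↦ ‖A x‖₁` of a sign matrix `A`, given by its rows. -/
def signSeminorm (A : κ → ι → ℤˣ) : Seminorm ℝ (ι → ℝ) :=
  .of (fun x ↦ ∑ i, |signForm (A i) x|)
    (fun x y ↦ by
      rw [← sum_add_distrib]
      exact sum_le_sum fun i _ ↦ by simpa only [map_add] using abs_add_le _ _)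
    (fun c x ↦ by simp only [map_smul, smul_eq_mul, abs_mul, ← mul_sum, norm_eq_abs])

theorem expect_intUnits {K : Type*} [Field K] [CharZero K] (f : ℤˣ → K) :
    𝔼 ε, f ε = (f 1 + f (-1)) / 2 := by
  rw [Fintype.expect_eq_sum_div_card, UnitsInt.univ, sum_pair (by decide), Fintype.card_units_int,
    Nat.cast_ofNat]

theorem prod_cos_le_three_quarters {x : ι → ℝ} (hx : ‖toLp 2 x‖ = 1) :
    ∏ j, cos (x j) ≤ 3 / 4 := by
  have hcoord (j : ι) : |x j| ≤ 1 := hx ▸ PiLp.norm_apply_le (toLp 2 x) j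
  have hsum : ∑ j, x j ^ 2 = 1 := by
    simpa [hx] using (EuclideanSpace.real_norm_sq_eq (toLp 2 x)).symm
  calc ∏ j, cos (x j) ≤ ∏ j, exp (-(x j ^ 2 / 3)) :=
        prod_le_prod (fun j _ ↦ (cos_pos_of_le_one (hcoord j)).le)
          fun j _ ↦ cos_le_exp_neg_sq_div_three (hcoord j)
    _ = (exp (1 / 3))⁻¹ := by rw [← exp_sum, sum_neg_distrib, ← sum_div, hsum, exp_neg]
    _ ≤ (4 / 3)⁻¹ := by gcongr; linarith [add_one_le_exp (1 / 3)]
    _ = 3 / 4 := by norm_num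

variable [DecidableEq ι]

theorem expect_exp_signForm (x : ι → ℝ) :
    𝔼 ω : ι → ℤˣ, exp (signForm ω x) = ∏ j, cosh (x j) := by
  simp_rw [signForm_apply, exp_sum,
    expect_prod_apply (fun j (ε : ℤˣ) ↦ exp (((ε : ℤ) : ℝ) * x j)), expect_intUnits, cosh_eq]
  simp

theorem expect_cos_signForm (x : ι → ℝ) :
    𝔼 ω : ι → ℤˣ, cos (signForm ω x) = ∏ j, cos (x j) := by
  have hcexp : 𝔼 ω : ι → ℤˣ, Complex.exp (signForm ω x * Complex.I) = ∏ j, Complex.cos (x j) := by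
    simp_rw [signForm_apply, Complex.ofReal_sum, sum_mul, Complex.exp_sum,
      expect_prod_apply
        (fun j (ε : ℤˣ) ↦ Complex.exp (((((ε : ℤ) : ℝ) * x j : ℝ) : ℂ) * Complex.I)),
      expect_intUnits, Complex.cos]
    simp
  have hre := congr_arg Complex.re hcexp
  simp_rw [← Complex.ofReal_cos, ← Complex.ofReal_prod, Complex.ofReal_re] at hre
  rw [← hre, Fintype.expect_eq_sum_div_card, Fintype.expect_eq_sum_div_card,
    ← Complex.ofReal_natCast, Complex.div_ofReal_re, Complex.re_sum]
  simp_rw [Complex.exp_ofReal_mul_I_re]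

theorem expect_exp_signForm_le (x : ι → ℝ) :
    𝔼 ω : ι → ℤˣ, exp (signForm ω x) ≤ exp (‖toLp 2 x‖ ^ 2 / 2) := by
  rw [expect_exp_signForm, EuclideanSpace.real_norm_sq_eq, sum_div, exp_sum]
  exact prod_le_prod (fun j _ ↦ (cosh_pos _).le) fun j _ ↦ cosh_le_exp_half_sq _

theorem expect_exp_abs_signForm_le {x : ι → ℝ} (hx : ‖toLp 2 x‖ = 1) :
    𝔼 ω : ι → ℤˣ, exp |signForm ω x| ≤ exp (3 / 2) := by
  have hneg : 𝔼 ω : ι → ℤˣ, exp (-signForm ω x) ≤ exp (1 / 2) := by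
    simpa [hx] using expect_exp_signForm_le (-x)
  have hpos : 𝔼 ω : ι → ℤˣ, exp (signForm ω x) ≤ exp (1 / 2) := by
    simpa [hx] using expect_exp_signForm_le x
  calc 𝔼 ω : ι → ℤˣ, exp |signForm ω x|
      ≤ 𝔼 ω : ι → ℤˣ, (exp (signForm ω x) + exp (-signForm ω x)) :=
        expect_le_expect fun ω _ ↦ exp_abs_le _
    _ ≤ 2 * exp (1 / 2) := by rw [expect_add_distrib]; linarith
    _ ≤ exp 1 * exp (1 / 2) := by gcongr; linarith [add_one_le_exp 1]
    _ = exp (3 / 2) := by rw [← exp_add]; norm_num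

-- Dominating `exp (-|·|)` by an affine function of `cos` makes its mean a product over coordinates.
theorem expect_exp_neg_abs_signForm_le {x : ι → ℝ} (hx : ‖toLp 2 x‖ = 1) :
    𝔼 ω : ι → ℤˣ, exp (-|signForm ω x|) ≤ exp (-(1 / 16)) := by
  calc 𝔼 ω : ι → ℤˣ, exp (-|signForm ω x|)
      ≤ 𝔼 ω : ι → ℤˣ, (3 / 4 + 1 / 4 * cos (signForm ω x)) := by
        refine expect_le_expect fun ω _ ↦ ?_
        have h := exp_neg_le_three_add_cos_div_four (abs_nonneg (signForm ω x))
        rw [cos_abs] at h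
        linarith
    _ = 3 / 4 + 1 / 4 * ∏ j, cos (x j) := by
        rw [expect_add_distrib, Fintype.expect_const, ← mul_expect, expect_cos_signForm]
    _ ≤ exp (-(1 / 16)) := by
        linarith [prod_cos_le_three_quarters hx, add_one_le_exp (-(1 / 16) : ℝ)]

variable [DecidableEq κ]

theorem dens_two_mul_card_lt_signSeminorm_le {x : ι → ℝ} (hx : ‖toLp 2 x‖ = 1) :
    (dens {A : κ → ι → ℤˣ | 2 * Fintype.card κ < signSeminorm A x} : ℝ) ≤
      exp (-(Fintype.card κ / 32)) := by
  set N := Fintype.card κ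
  calc (dens {A : κ → ι → ℤˣ | 2 * N < signSeminorm A x} : ℝ)
      ≤ dens {A : κ → ι → ℤˣ | 2 * N ≤ ∑ i, |signForm (A i) x|} := by
        gcongr with A; exact le_of_lt
    _ ≤ exp (-(2 * N)) * (𝔼 ω : ι → ℤˣ, exp |signForm ω x|) ^ N :=
        dens_le_sum_apply_le (fun ω ↦ |signForm ω x|) _
    _ ≤ exp (-(2 * N)) * exp (3 / 2) ^ N := by
        gcongr
        exact expect_exp_abs_signForm_le hx
    _ ≤ exp (-(N / 32)) := by
        rw [← exp_nat_mul, ← exp_add]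
        gcongr
        linarith [N.cast_nonneg (α := ℝ)]

theorem dens_signSeminorm_lt_card_div_le {x : ι → ℝ} (hx : ‖toLp 2 x‖ = 1) :
    (dens {A : κ → ι → ℤˣ | signSeminorm A x < Fintype.card κ / 32} : ℝ) ≤
      exp (-(Fintype.card κ / 32)) := by
  set N := Fintype.card κ
  calc (dens {A : κ → ι → ℤˣ | signSeminorm A x < N / 32} : ℝ)
      ≤ dens {A : κ → ι → ℤˣ | -(N / 32 : ℝ) ≤ ∑ i, -|signForm (A i) x|} := by
        gcongr with A
        rw [sum_neg_distrib, neg_le_neg_iff]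
        exact le_of_lt
    _ ≤ exp (-(-(N / 32))) * (𝔼 ω : ι → ℤˣ, exp (-|signForm ω x|)) ^ N :=
        dens_le_sum_apply_le (fun ω ↦ -|signForm ω x|) _
    _ ≤ exp (-(-(N / 32))) * exp (-(1 / 16)) ^ N := by
        gcongr
        exact expect_exp_neg_abs_signForm_le hx
    _ = exp (-(N / 32)) := by
        rw [← exp_nat_mul, ← exp_add]
        congr 1
        ring

theorem dens_signSeminorm_notMem_Icc_le_of_norm_eq_one {x : ι → ℝ} (hx : ‖toLp 2 x‖ = 1) :
    (dens {A : κ → ι → ℤˣ | signSeminorm A x ∉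
        Set.Icc (Fintype.card κ / 32 : ℝ) (2 * Fintype.card κ)} : ℝ) ≤
      2 * exp (-(Fintype.card κ / 32)) := by
  have hlo := dens_signSeminorm_lt_card_div_le (κ := κ) hx
  have hhi := dens_two_mul_card_lt_signSeminorm_le (κ := κ) hx
  simp only [Set.mem_Icc, not_and_or, not_le, filter_or]
  refine (NNRat.cast_le.2 (dens_union_le _ _)).trans ?_
  rw [NNRat.cast_add]
  linarith

theorem dens_signSeminorm_notMem_Icc_le (x : ι → ℝ) :
    (dens {A : κ → ι → ℤˣ | signSeminorm A x ∉
        Set.Icc (Fintype.card κ / 32 * ‖toLp 2 x‖) (2 * Fintype.card κ * ‖toLp 2 x‖)} : ℝ) ≤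
      2 * exp (-(Fintype.card κ / 32)) := by
  rcases eq_or_ne x 0 with rfl | hx
  · simp [(exp_pos _).le]
  have hr : 0 < ‖toLp 2 x‖ := by simpa using hx
  set r := ‖toLp 2 x‖
  have hunit : ‖toLp 2 (r⁻¹ • x)‖ = 1 := by
    rw [toLp_smul, norm_smul, norm_inv, norm_norm, inv_mul_cancel₀ hr.ne']
  have hscale (A : κ → ι → ℤˣ) : signSeminorm A (r⁻¹ • x) = signSeminorm A x / r := by
    rw [map_smul_eq_mul, norm_inv, norm_norm, inv_mul_eq_div]
  simpa only [hscale, Set.mem_Icc, le_div_iff₀ hr, div_le_iff₀ hr] using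
    dens_signSeminorm_notMem_Icc_le_of_norm_eq_one (κ := κ) hunit

end SignForm

section IntegerVectors

variable {ι κ : Type*} [Fintype ι] [Fintype κ]

theorem sum_pow_natAbs_le (s : Finset ℤ) {r : ℝ} (hr0 : 0 ≤ r) (hr1 : r < 1) :
    ∑ k ∈ s, r ^ k.natAbs ≤ (1 + r) / (1 - r) := by
  have hgeom := hasSum_geometric_of_lt_one hr0 hr1
  have hint : HasSum (fun k : ℤ ↦ r ^ k.natAbs) ((1 - r)⁻¹ + (1 - r)⁻¹ * r) :=
    .of_nat_of_neg_add_one (by simpa using hgeom) <| by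
      convert! hgeom.mul_right r using 2
  calc ∑ k ∈ s, r ^ k.natAbs ≤ (1 - r)⁻¹ + (1 - r)⁻¹ * r :=
        sum_le_hasSum s (fun k _ ↦ by positivity) hint
    _ = (1 + r) / (1 - r) := by ring

/-- A seminorm `P` with `a ‖z‖₂ ≤ P z ≤ b ‖z‖₂` for all integer vectors `z` with `‖z‖₁ ≤ t`: the
restricted isometry property, with sparse vectors replaced by a finite family. -/
def IsIntIsometry (P : Seminorm ℝ (ι → ℝ)) (a b : ℝ) (t : ℕ) : Prop :=
  ∀ z : ι → ℤ, ∑ j, (z j).natAbs ≤ t →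
    P (fun j ↦ z j) ∈ Set.Icc (a * ‖toLp 2 fun j ↦ (z j : ℝ)‖) (b * ‖toLp 2 fun j ↦ (z j : ℝ)‖)

variable [DecidableEq ι]

variable (ι) in
/-- The finite set of integer vectors `z` with `‖z‖₁ ≤ t`. -/
noncomputable def intL1Ball (t : ℕ) : Finset (ι → ℤ) :=
  {z ∈ Fintype.piFinset fun _ ↦ Icc (-t : ℤ) t | ∑ j, (z j).natAbs ≤ t}

theorem mem_intL1Ball {t : ℕ} {z : ι → ℤ} : z ∈ intL1Ball ι t ↔ ∑ j, (z j).natAbs ≤ t := by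
  refine mem_filter.trans <| and_iff_right_of_imp fun hz ↦ Fintype.mem_piFinset.2 fun j ↦ ?_
  have hj : (z j).natAbs ≤ t :=
    (single_le_sum (f := fun j ↦ (z j).natAbs) (fun _ _ ↦ Nat.zero_le _) (mem_univ j)).trans hz
  rw [mem_Icc]
  omega

theorem card_intL1Ball_le_pow_mul (t : ℕ) {y : ℝ} (hy : 1 < y) :
    (#(intL1Ball ι t) : ℝ) ≤ y ^ t * ((1 + y⁻¹) / (1 - y⁻¹)) ^ Fintype.card ι := by
  have : 0 < y := by linarith
  calc (#(intL1Ball ι t) : ℝ) = ∑ _z ∈ intL1Ball ι t, 1 := by simp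
    _ ≤ ∑ z ∈ intL1Ball ι t, y ^ t * ∏ j, y⁻¹ ^ (z j).natAbs := by
        refine sum_le_sum fun z hz ↦ ?_
        rw [prod_pow_eq_pow_sum, inv_pow, ← div_eq_mul_inv, one_le_div (by positivity)]
        exact pow_le_pow_right₀ hy.le (mem_intL1Ball.1 hz)
    _ ≤ ∑ z ∈ Fintype.piFinset fun _ : ι ↦ Icc (-t : ℤ) t, y ^ t * ∏ j, y⁻¹ ^ (z j).natAbs :=
        sum_le_sum_of_subset_of_nonneg (filter_subset _ _) fun z _ _ ↦ by positivity
    _ = y ^ t * (∑ k ∈ Icc (-t : ℤ) t, y⁻¹ ^ k.natAbs) ^ Fintype.card ι := by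
        rw [← mul_sum, ← prod_univ_sum (fun _ ↦ Icc (-t : ℤ) t) fun _ k ↦ y⁻¹ ^ k.natAbs,
          prod_const, card_univ]
    _ ≤ y ^ t * ((1 + y⁻¹) / (1 - y⁻¹)) ^ Fintype.card ι := by
        gcongr
        exact sum_pow_natAbs_le _ (by positivity) (inv_lt_one_of_one_lt₀ hy)

theorem card_intL1Ball_le [Nonempty ι] {t : ℕ} (ht : 0 < t) :
    (#(intL1Ball ι t) : ℝ) ≤ (1 + 2 * Fintype.card ι / t) ^ t * exp t := by
  have hι : (0 : ℝ) < Fintype.card ι := mod_cast Fintype.card_pos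
  have : (0 : ℝ) < t := mod_cast ht
  set m := Fintype.card ι
  set y : ℝ := 1 + 2 * m / t with hy
  have hy1 : 1 < y := lt_add_of_pos_right 1 (by positivity)
  have hratio : (1 + y⁻¹) / (1 - y⁻¹) = t / m + 1 := by
    have : y - 1 ≠ 0 := by linarith
    rw [hy] at this ⊢
    field_simp
    ring
  calc (#(intL1Ball ι t) : ℝ) ≤ y ^ t * (t / m + 1) ^ m :=
        hratio ▸ card_intL1Ball_le_pow_mul t hy1
    _ ≤ y ^ t * exp (t / m) ^ m := by gcongr; exact add_one_le_exp _
    _ = y ^ t * exp t := by rw [← exp_nat_mul, mul_div_cancel₀ _ hι.ne']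

theorem exists_isIntIsometry_signSeminorm {t : ℕ}
    (h : #(intL1Ball ι t) * (2 * exp (-(Fintype.card κ / 32))) < 1) :
    ∃ A : κ → ι → ℤˣ,
      IsIntIsometry (signSeminorm A) (Fintype.card κ / 32) (2 * Fintype.card κ) t := by
  classical
  by_contra! hbad
  let bad (z : ι → ℤ) : Finset (κ → ι → ℤˣ) :=
    {A | signSeminorm A (fun j ↦ (z j : ℝ)) ∉ Set.Icc
      (Fintype.card κ / 32 * ‖toLp 2 fun j ↦ (z j : ℝ)‖)
      (2 * Fintype.card κ * ‖toLp 2 fun j ↦ (z j : ℝ)‖)}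
  have hcover : univ = (intL1Ball ι t).biUnion bad := by
    refine (eq_univ_of_forall fun A ↦ ?_).symm
    obtain ⟨z, hz, hzA⟩ : ∃ z : ι → ℤ, ∑ j, (z j).natAbs ≤ t ∧ A ∈ bad z := by
      simpa [IsIntIsometry, bad] using hbad A
    exact mem_biUnion.2 ⟨z, mem_intL1Ball.2 hz, hzA⟩
  refine h.not_ge ?_
  calc (1 : ℝ) = (dens (univ : Finset (κ → ι → ℤˣ)) : ℚ≥0) := by simp
    _ ≤ ∑ z ∈ intL1Ball ι t, (dens (bad z) : ℝ) := by
        rw [hcover, ← NNRat.cast_sum]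
        exact NNRat.cast_le.2 dens_biUnion_le
    _ ≤ #(intL1Ball ι t) * (2 * exp (-(Fintype.card κ / 32))) := by
        rw [← nsmul_eq_mul]
        exact sum_le_card_nsmul _ _ _ fun z _ ↦ dens_signSeminorm_notMem_Icc_le _

end IntegerVectors

section Truncation

variable {ι : Type*} [Fintype ι]

theorem exists_card_eq_forall_notMem_le (g : ι → ℝ) {n : ℕ} (hn : n ≤ Fintype.card ι) :
    ∃ S : Finset ι, #S = n ∧ ∀ i ∈ S, ∀ j ∉ S, g j ≤ g i := by
  classical
  induction n with
  | zero => exact ⟨∅, by simp⟩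
  | succ n ih =>
    obtain ⟨S, hS, htop⟩ := ih (by omega)
    obtain ⟨k, hk, hkmax⟩ := exists_max_image Sᶜ g (by
      rw [← card_pos, card_compl]
      omega)
    rw [mem_compl] at hk
    refine ⟨insert k S, by rw [card_insert_of_notMem hk, hS], fun i hi j hj ↦ ?_⟩
    rw [mem_insert, not_or] at hj
    rcases mem_insert.1 hi with rfl | hi
    · exact hkmax j (mem_compl.2 hj.2)
    · exact htop i hi j hj.2

theorem exists_card_le_sum_mul_le {g f : ι → ℝ} (hg : ∀ j, 0 ≤ g j) (hf0 : ∀ j, 0 ≤ f j)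
    (hf1 : ∀ j, f j ≤ 1) {t : ℕ} (hf : ∑ j, f j ≤ t) :
    ∃ S : Finset ι, #S ≤ t ∧ ∑ j, g j * f j ≤ ∑ j ∈ S, g j := by
  classical
  obtain ⟨S, hS, htop⟩ := exists_card_eq_forall_notMem_le g (min_le_right t (Fintype.card ι))
  refine ⟨S, hS.trans_le (min_le_left _ _), ?_⟩
  rcases Sᶜ.eq_empty_or_nonempty with hS_univ | hS_compl
  · rw [compl_eq_empty_iff] at hS_univ
    subst hS_univ
    exact sum_le_sum fun j _ ↦ mul_le_of_le_one_right (hg j) (hf1 j)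
  have hcard : #S = t := by
    have := card_pos.2 hS_compl
    rw [card_compl] at this
    omega
  obtain ⟨k, hk, hkmax⟩ := exists_max_image Sᶜ g hS_compl
  have hpoint (j : ι) : g j * f j - (if j ∈ S then g j else 0) ≤
      g k * (f j - if j ∈ S then 1 else 0) := by
    split_ifs with hj
    · nlinarith [htop j hj k (mem_compl.1 hk), hf1 j]
    · nlinarith [hkmax j (mem_compl.2 hj), hf0 j]
  have hsum := sum_le_sum fun j (_ : j ∈ univ) ↦ hpoint j
  simp only [sum_sub_distrib, ← mul_sum, sum_ite_mem, univ_inter, sum_const, hcard,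
    nsmul_eq_mul, mul_one] at hsum
  nlinarith [hg k]

theorem exists_int_sum_mul_le (g : ι → ℝ) {f : ι → ℝ} (hf1 : ∀ j, |f j| ≤ 1) {t : ℕ}
    (hf : ∑ j, |f j| ≤ t) :
    ∃ z : ι → ℤ, (∀ j, (z j).natAbs ≤ 1) ∧ ∑ j, (z j).natAbs ≤ t ∧
      ∑ j, g j * f j ≤ ∑ j, g j * z j := by
  classical
  obtain ⟨S, hS, hle⟩ :=
    exists_card_le_sum_mul_le (fun j ↦ abs_nonneg (g j)) (fun j ↦ abs_nonneg (f j)) hf1 hf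
  have hsign (j : ι) : (SignType.sign (g j) : ℤ).natAbs ≤ 1 := by
    cases SignType.sign (g j) <;> simp
  refine ⟨fun j ↦ if j ∈ S then SignType.sign (g j) else 0, fun j ↦ ?_, ?_, ?_⟩
  · dsimp only
    split_ifs
    exacts [hsign j, zero_le_one]
  · calc ∑ j, (if j ∈ S then (SignType.sign (g j) : ℤ) else 0).natAbs
        ≤ ∑ j, if j ∈ S then 1 else 0 :=
          sum_le_sum fun j _ ↦ by split_ifs; exacts [hsign j, le_rfl]
      _ ≤ t := by simpa using hS
  · calc ∑ j, g j * f j ≤ ∑ j, |g j| * |f j| :=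
          sum_le_sum fun j _ ↦ abs_mul (g j) (f j) ▸ le_abs_self _
      _ ≤ ∑ j ∈ S, |g j| := hle
      _ = ∑ j, g j * ((if j ∈ S then (SignType.sign (g j) : ℤ) else 0 : ℤ) : ℝ) := by
          simp [apply_ite, self_mul_sign]

theorem exists_dual_eq_le_seminorm {E : Type*} [AddCommGroup E] [Module ℝ E] (P : Seminorm ℝ E)
    (x : E) : ∃ g : Module.Dual ℝ E, g x = P x ∧ ∀ y, g y ≤ P y := by
  rcases eq_or_ne x 0 with rfl | hx
  · exact ⟨0, by simp, fun y ↦ apply_nonneg P y⟩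
  obtain ⟨g, hext, hle⟩ := Module.Dual.exists_extension_of_le_seminorm_real
    (ℝ ∙ x) (P x • (LinearEquiv.coord ℝ E x hx).toLinearMap) (p := P) fun y ↦ by
      conv_rhs => rw [← LinearEquiv.coord_apply_smul ℝ E x hx y, map_smul_eq_mul, mul_comm]
      exact mul_le_mul_of_nonneg_left (le_abs_self _) (apply_nonneg P x)
  refine ⟨g, ?_, fun y ↦ (le_abs_self _).trans (hle y)⟩
  simpa [LinearEquiv.coord_self] using hext ⟨x, Submodule.mem_span_singleton_self x⟩

-- A supporting functional of `P` at `f` reduces the maximization of `P` to a linear program.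
theorem exists_int_seminorm_le (P : Seminorm ℝ (ι → ℝ)) {f : ι → ℝ} (hf1 : ∀ j, |f j| ≤ 1)
    {t : ℕ} (hf : ∑ j, |f j| ≤ t) :
    ∃ z : ι → ℤ, (∀ j, (z j).natAbs ≤ 1) ∧ ∑ j, (z j).natAbs ≤ t ∧ P f ≤ P fun j ↦ z j := by
  classical
  obtain ⟨g, hgf, hgP⟩ := exists_dual_eq_le_seminorm P f
  obtain ⟨z, hz1, hzt, hle⟩ :=
    exists_int_sum_mul_le (fun j ↦ g fun i ↦ if j = i then 1 else 0) hf1 hf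
  have hg (x : ι → ℝ) : g x = ∑ j, (g fun i ↦ if j = i then 1 else 0) * x j := by
    simp_rw [g.pi_apply_eq_sum_univ x, smul_eq_mul, mul_comm]
  refine ⟨z, hz1, hzt, ?_⟩
  rw [← hgf, hg f]
  exact hle.trans ((hg _).symm.trans_le (hgP _))

theorem exists_int_abs_sub_le (x : ℝ) :
    ∃ z : ℤ, (z.natAbs : ℝ) ≤ |x| ∧ |x - z| ≤ 1 ∧ |x - z| ≤ |x| := by
  wlog hx : 0 ≤ x generalizing x
  · obtain ⟨z, hz⟩ := this (-x) (by linarith)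
    refine ⟨-z, ?_⟩
    rwa [Int.natAbs_neg, Int.cast_neg, sub_neg_eq_add, ← abs_neg x, ← abs_neg (x + z), neg_add]
  refine ⟨⌊x⌋, ?_⟩
  have hfloor : (0 : ℝ) ≤ ⌊x⌋ := mod_cast Int.floor_nonneg.2 hx
  rw [Nat.cast_natAbs, Int.cast_abs, abs_of_nonneg hx, abs_of_nonneg hfloor, Int.self_sub_floor,
    Int.abs_fract]
  exact ⟨Int.floor_le x, (Int.fract_lt_one x).le, by linarith [Int.floor_add_fract x]⟩

theorem norm_toLp_two_le_sqrt_of_abs_le_one {y : ι → ℝ} (hy1 : ∀ j, |y j| ≤ 1) {t : ℝ}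
    (hy : ∑ j, |y j| ≤ t) : ‖toLp 2 y‖ ≤ √t := by
  refine le_sqrt_of_sq_le ((EuclideanSpace.real_norm_sq_eq _).trans_le (le_trans ?_ hy))
  refine sum_le_sum fun j _ ↦ ?_
  rw [← sq_abs]
  exact pow_le_of_le_one (abs_nonneg _) (hy1 j) two_ne_zero

namespace IsIntIsometry

variable {P : Seminorm ℝ (ι → ℝ)} {a b : ℝ} {t : ℕ}

theorem seminorm_le_mul_sqrt (hP : IsIntIsometry P a b t) (hb : 0 ≤ b) {f : ι → ℝ}
    (hf1 : ∀ j, |f j| ≤ 1) (hf : ∑ j, |f j| ≤ t) : P f ≤ b * √t := by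
  obtain ⟨w, hw1, hwt, hfw⟩ := exists_int_seminorm_le P hf1 hf
  have hnorm : ‖toLp 2 fun j ↦ (w j : ℝ)‖ ≤ √t := by
    refine norm_toLp_two_le_sqrt_of_abs_le_one (fun j ↦ ?_) ?_ <;>
      simp only [← Int.cast_abs, ← Nat.cast_natAbs, ← Nat.cast_sum]
    · exact mod_cast hw1 j
    · exact mod_cast hwt
  calc P f ≤ P fun j ↦ w j := hfw
    _ ≤ b * ‖toLp 2 fun j ↦ (w j : ℝ)‖ := (hP w hwt).2
    _ ≤ b * √t := by gcongr

theorem norm_le_of_sum_abs_le (hP : IsIntIsometry P a b t) (ha : 0 < a) (hb : 0 ≤ b) {x : ι → ℝ}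
    (hx : P x = 0) (hxt : ∑ j, |x j| ≤ t) : ‖toLp 2 x‖ ≤ (b / a + 1) * √t := by
  choose z hzx hf1 hfx using fun j ↦ exists_int_abs_sub_le (x j)
  set u : ι → ℝ := fun j ↦ z j
  have hzt : ∑ j, (z j).natAbs ≤ t := by
    have : ∑ j, ((z j).natAbs : ℝ) ≤ t := (sum_le_sum fun j _ ↦ hzx j).trans hxt
    exact mod_cast this
  have hft : ∑ j, |(x - u) j| ≤ t := (sum_le_sum fun j _ ↦ hfx j).trans hxt
  have hu : ‖toLp 2 u‖ ≤ b * √t / a := by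
    rw [le_div_iff₀' ha]
    calc a * ‖toLp 2 u‖ ≤ P u := (hP z hzt).1
      _ = P (x - (x - u)) := by rw [sub_sub_cancel]
      _ ≤ P x + P (x - u) := map_sub_le_add P _ _
      _ ≤ b * √t := by
          rw [hx, zero_add]
          exact hP.seminorm_le_mul_sqrt hb hf1 hft
  calc ‖toLp 2 x‖ = ‖toLp 2 u + toLp 2 (x - u)‖ := by rw [← toLp_add, add_sub_cancel]
    _ ≤ ‖toLp 2 u‖ + ‖toLp 2 (x - u)‖ := norm_add_le _ _
    _ ≤ b * √t / a + √t := add_le_add hu (norm_toLp_two_le_sqrt_of_abs_le_one hf1 hft)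
    _ = (b / a + 1) * √t := by ring

theorem sum_sq_le_of_seminorm_eq_zero (hP : IsIntIsometry P a b t) (ha : 0 < a) (hb : 0 ≤ b)
    (ht : 0 < t) {x : ι → ℝ} (hx : P x = 0) :
    ∑ j, x j ^ 2 ≤ (b / a + 1) ^ 2 / t * (∑ j, |x j|) ^ 2 := by
  rcases eq_or_ne x 0 with rfl | hx0
  · simp
  have ht' : (0 : ℝ) < t := mod_cast ht
  obtain ⟨i, hi⟩ := Function.ne_iff.1 hx0
  have hs : 0 < ∑ j, |x j| :=
    sum_pos' (fun j _ ↦ abs_nonneg _) ⟨i, mem_univ i, abs_pos.2 hi⟩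
  set s := ∑ j, |x j| with hs_def
  have hscaled := hP.norm_le_of_sum_abs_le ha hb (x := (t / s) • x)
    (by rw [map_smul_eq_mul, hx, mul_zero])
    (by simp [abs_mul, ← mul_sum, ← hs_def, abs_of_pos (div_pos ht' hs), hs.ne'])
  rw [toLp_smul, norm_smul, norm_of_nonneg (by positivity)] at hscaled
  have hsq := pow_le_pow_left₀ (by positivity) hscaled 2
  rw [mul_pow, mul_pow, sq_sqrt ht'.le, EuclideanSpace.real_norm_sq_eq] at hsq
  calc ∑ j, x j ^ 2 = (s / t) ^ 2 * ((t / s) ^ 2 * ∑ j, x j ^ 2) := by field_simp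
    _ ≤ (s / t) ^ 2 * ((b / a + 1) ^ 2 * t) := by gcongr
    _ = (b / a + 1) ^ 2 / t * s ^ 2 := by field_simp

end IsIntIsometry

end Truncation

section Interpolation

variable {ι : Type*} [Fintype ι]

theorem sum_rpow_le_rpow_sum_rpow {x : ι → ℝ} (hx : ∀ j, 0 ≤ x j) {p r s : ℝ} (hp : 0 < p)
    (hpr : p ≤ r) (hrs : r ≤ s) (h : ∑ j, x j ^ p ≤ 1) :
    ∑ j, x j ^ r ≤ (∑ j, x j ^ s) ^ ((r - p) / (s - p)) := by
  rcases hpr.eq_or_lt with rfl | hpr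
  · simpa using h
  have hrp : 0 < r - p := sub_pos.2 hpr
  set e := (s - p) / (r - p) with he
  have he1 : 1 ≤ e := (one_le_div hrp).2 (by linarith)
  have hpow_r (j : ι) : x j ^ p * x j ^ (r - p) = x j ^ r := by
    rw [← rpow_add_of_nonneg (hx j) hp.le hrp.le, add_sub_cancel]
  have hpow_s (j : ι) : x j ^ p * (x j ^ (r - p)) ^ e = x j ^ s := by
    rw [← rpow_mul (hx j), he, mul_div_cancel₀ _ hrp.ne',
      ← rpow_add_of_nonneg (hx j) hp.le (by linarith), add_sub_cancel]
  have hholder := inner_le_weight_mul_Lp_of_nonneg univ he1 (fun j ↦ x j ^ p)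
    (fun j ↦ x j ^ (r - p)) (fun j ↦ rpow_nonneg (hx j) _) (fun j ↦ rpow_nonneg (hx j) _)
  simp only [hpow_r, hpow_s] at hholder
  rw [← inv_div, ← he]
  have hsum_nonneg (c : ℝ) : 0 ≤ ∑ j, x j ^ c := sum_nonneg fun j _ ↦ rpow_nonneg (hx j) c
  refine hholder.trans (mul_le_of_le_one_left (rpow_nonneg (hsum_nonneg s) _) ?_)
  exact rpow_le_one (hsum_nonneg p) h (sub_nonneg.2 (inv_le_one_of_one_le₀ he1))

variable {x : ι → ℝ} {p B : ℝ}

theorem sum_sq_le_rpow_of_sum_sq_le (hp : 0 < p) (hp1 : p ≤ 1) (hB : 0 ≤ B)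
    (h : ∑ j, |x j| ^ p ≤ 1) (h2 : ∑ j, x j ^ 2 ≤ B * (∑ j, |x j|) ^ 2) :
    ∑ j, x j ^ 2 ≤ B ^ ((2 - p) / p) := by
  have hS2_nonneg : 0 ≤ ∑ j, x j ^ 2 := by positivity
  have hS1 := sum_rpow_le_rpow_sum_rpow (fun j ↦ abs_nonneg (x j)) hp hp1 one_le_two h
  simp only [rpow_one, rpow_two, sq_abs] at hS1
  set S := ∑ j, x j ^ 2
  rcases hS2_nonneg.eq_or_lt with hS0 | hS0
  · exact hS0 ▸ rpow_nonneg hB _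
  have h2p : 0 < 2 - p := by linarith
  have hle : S ^ (p / (2 - p)) ≤ B := by
    rw [← mul_le_mul_iff_left₀ (rpow_pos_of_pos hS0 (2 * ((1 - p) / (2 - p))))]
    calc S ^ (p / (2 - p)) * S ^ (2 * ((1 - p) / (2 - p))) = S := by
          rw [← rpow_add hS0, ← mul_div_assoc, ← add_div, show p + 2 * (1 - p) = 2 - p by ring,
            div_self h2p.ne', rpow_one]
      _ ≤ B * (∑ j, |x j|) ^ 2 := h2
      _ ≤ B * (S ^ ((1 - p) / (2 - p))) ^ 2 := by gcongr
      _ = B * S ^ (2 * ((1 - p) / (2 - p))) := by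
          rw [← rpow_two, ← rpow_mul hS0.le, mul_comm 2]
  calc S = (S ^ (p / (2 - p))) ^ ((2 - p) / p) := by
        rw [← rpow_mul hS0.le, div_mul_div_cancel₀ h2p.ne', div_self hp.ne', rpow_one]
    _ ≤ B ^ ((2 - p) / p) := by gcongr

theorem rpow_sum_rpow_le_of_sum_sq_le {q : ℝ} (hp : 0 < p) (hp1 : p ≤ 1) (hpq : p ≤ q)
    (hq2 : q ≤ 2) (hB : 0 ≤ B) (h : ∑ j, |x j| ^ p ≤ 1)
    (h2 : ∑ j, x j ^ 2 ≤ B * (∑ j, |x j|) ^ 2) :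
    (∑ j, |x j| ^ q) ^ (1 / q) ≤ B ^ (1 / p - 1 / q) := by
  have hq : 0 < q := hp.trans_le hpq
  have h2p : 2 - p ≠ 0 := by linarith
  have hSq := sum_rpow_le_rpow_sum_rpow (fun j ↦ abs_nonneg (x j)) hp hpq hq2 h
  simp only [rpow_two, sq_abs] at hSq
  calc (∑ j, |x j| ^ q) ^ (1 / q)
      ≤ ((B ^ ((2 - p) / p)) ^ ((q - p) / (2 - p))) ^ (1 / q) := by
        gcongr
        refine hSq.trans (rpow_le_rpow (by positivity)
          (sum_sq_le_rpow_of_sum_sq_le hp hp1 hB h h2) ?_)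
        exact div_nonneg (by linarith) (by linarith)
    _ = B ^ (1 / p - 1 / q) := by
        rw [← rpow_mul hB, ← rpow_mul hB]
        congr 1
        field_simp

end Interpolation

section Gelfand

variable {m n t : ℕ} {p q : ℝ≥0∞} {σ x : Fin m → ℝ}

theorem lpnorm_nonneg (p : ℝ≥0∞) (x : Fin m → ℝ) : 0 ≤ lpnorm p x := by
  unfold lpnorm
  split_ifs
  · exact Real.iSup_nonneg fun j ↦ abs_nonneg _
  · positivity

theorem lpnorm_of_ne_top (hp : p ≠ ∞) (x : Fin m → ℝ) :
    lpnorm p x = (∑ j, |x j| ^ p.toReal) ^ (1 / p.toReal) := if_neg hp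

theorem sum_rpow_le_one_of_lpnorm_le_one (hp0 : p ≠ 0) (hp : p ≠ ∞) (hx : lpnorm p x ≤ 1) :
    ∑ j, |x j| ^ p.toReal ≤ 1 := by
  have hpos : 0 < 1 / p.toReal := one_div_pos.2 (ENNReal.toReal_pos hp0 hp)
  rw [lpnorm_of_ne_top hp] at hx
  contrapose! hx
  exact one_lt_rpow hx hpos

theorem lpnorm_mul_le (hq0 : q ≠ 0) (hq : q ≠ ∞) {s : ℝ} (hs : 0 ≤ s)
    (hσ : ∀ j, x j ≠ 0 → |σ j| ≤ s) : lpnorm q (fun j ↦ σ j * x j) ≤ s * lpnorm q x := by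
  have hpos : 0 < q.toReal := ENNReal.toReal_pos hq0 hq
  rw [lpnorm_of_ne_top hq, lpnorm_of_ne_top hq]
  calc (∑ j, |σ j * x j| ^ q.toReal) ^ (1 / q.toReal)
      ≤ (∑ j, (s * |x j|) ^ q.toReal) ^ (1 / q.toReal) := by
        gcongr with j
        rw [abs_mul]
        rcases eq_or_ne (x j) 0 with hj | hj
        · simp [hj]
        · gcongr
          exact hσ j hj
    _ = s * (∑ j, |x j| ^ q.toReal) ^ (1 / q.toReal) := by
        simp_rw [mul_rpow hs (abs_nonneg _), ← mul_sum]
        rw [mul_rpow (by positivity) (by positivity), ← rpow_mul hs, mul_one_div_cancel hpos.ne',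
          rpow_one]

theorem gelfandFin_le_of_forall_ker {V : Type*} [AddCommGroup V] [Module ℝ V]
    [FiniteDimensional ℝ V] (f : (Fin m → ℝ) →ₗ[ℝ] V) (hf : Module.finrank ℝ V ≤ n - 1) {C : ℝ}
    (hC : 0 ≤ C) (h : ∀ x, f x = 0 → lpnorm p x ≤ 1 → lpnorm q (fun j ↦ σ j * x j) ≤ C) :
    gelfandFin p q σ n ≤ C := by
  refine csInf_le_of_le ⟨0, ?_⟩ ⟨LinearMap.ker f, ?_, rfl⟩ (Real.sSup_le ?_ hC)
  · rintro _ ⟨E, -, rfl⟩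
    refine Real.sSup_nonneg ?_
    rintro _ ⟨x, -, rfl⟩
    exact lpnorm_nonneg _ _
  · rw [f.quotKerEquivRange.finrank_eq]
    exact (Submodule.finrank_le _).trans hf
  · rintro _ ⟨x, ⟨hx1, hxf⟩, rfl⟩
    exact h x hxf hx1

theorem gelfandFin_le_of_isIntIsometry {κ : Type*} [Fintype κ] {A : κ → Fin m → ℤˣ} {a b s : ℝ}
    (hp0 : 0 < p) (hp1 : p ≤ 1) (hpq : p ≤ q) (hq2 : q ≤ 2)
    (hA : IsIntIsometry (signSeminorm A) a b t) (ha : 0 < a) (hb : 0 ≤ b) (ht : 0 < t) (htm : t ≤ m)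
    (hcodim : Fintype.card κ + t ≤ n - 1) (hs : 0 ≤ s) (hσ : ∀ j : Fin m, t ≤ j → |σ j| ≤ s) :
    gelfandFin p q σ n ≤ s * ((b / a + 1) ^ 2 / t) ^ (1 / p.toReal - 1 / q.toReal) := by
  have hp : p ≠ ∞ := (hp1.trans_lt ENNReal.one_lt_top).ne
  have hq : q ≠ ∞ := (hq2.trans_lt ENNReal.ofNat_lt_top).ne
  refine gelfandFin_le_of_forall_ker
    ((LinearMap.pi fun i ↦ signForm (A i)).prod (LinearMap.funLeft ℝ ℝ (Fin.castLE htm)))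
    (by simpa using hcodim) (by positivity) fun x hx hx1 ↦ ?_
  obtain ⟨hform, hinit⟩ := Prod.ext_iff.1 hx
  have hsemi : signSeminorm A x = 0 :=
    sum_eq_zero fun i _ ↦ abs_eq_zero.2 (congr_fun hform i)
  have htail (j : Fin m) (hj : x j ≠ 0) : |σ j| ≤ s :=
    hσ j <| not_lt.1 fun hjt ↦ hj (congr_fun hinit ⟨j, hjt⟩)
  refine (lpnorm_mul_le (hp0.trans_le hpq).ne' hq hs htail).trans ?_
  gcongr
  rw [lpnorm_of_ne_top hq]
  exact rpow_sum_rpow_le_of_sum_sq_le (ENNReal.toReal_pos hp0.ne' hp)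
    (by simpa using ENNReal.toReal_mono ENNReal.one_ne_top hp1) (ENNReal.toReal_mono hq hpq)
    (by simpa using ENNReal.toReal_mono ENNReal.ofNat_ne_top hq2) (by positivity)
    (sum_rpow_le_one_of_lpnorm_le_one hp0.ne' hp hx1)
    (hA.sum_sq_le_of_seminorm_eq_zero ha hb ht hsemi)

theorem gelfandFin_le_mul_rpow {N : ℕ} {s : ℝ} (hp0 : 0 < p) (hp1 : p ≤ 1) (hpq : p ≤ q)
    (hq2 : q ≤ 2) (ht : 0 < t) (hN : 0 < N) (htm : t ≤ m) (hcodim : N + t ≤ n - 1)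
    (hcount : (1 + 2 * m / t : ℝ) ^ t * exp t * (2 * exp (-(N / 32))) < 1) (hs : 0 ≤ s)
    (hσ : ∀ j : Fin m, t ≤ j → |σ j| ≤ s) :
    gelfandFin p q σ n ≤ s * (4225 / t) ^ (1 / p.toReal - 1 / q.toReal) := by
  have : (0 : ℝ) < N := mod_cast hN
  have : Nonempty (Fin m) := ⟨⟨0, ht.trans_le htm⟩⟩
  have hcard : (#(intL1Ball (Fin m) t) : ℝ) ≤ (1 + 2 * m / t) ^ t * exp t := by
    simpa only [Fintype.card_fin] using card_intL1Ball_le (ι := Fin m) ht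
  obtain ⟨A, hA⟩ := exists_isIntIsometry_signSeminorm (ι := Fin m) (κ := Fin N) (t := t) <| by
    rw [Fintype.card_fin]
    exact (mul_le_mul_of_nonneg_right hcard (by positivity)).trans_lt hcount
  rw [Fintype.card_fin] at hA
  have hdistortion : (2 * N / (N / 32) + 1 : ℝ) ^ 2 = 4225 := by
    field_simp
    norm_num
  rw [← hdistortion]
  exact gelfandFin_le_of_isIntIsometry hp0 hp1 hpq hq2 hA (by positivity) (by positivity) ht htm
    (by rwa [Fintype.card_fin]) hs hσ

theorem exp_log_exp_one_mul_div_sub_one (hn : 1 ≤ n) (hnm : n ≤ m) :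
    exp (log (exp 1 * m / n) - 1) = m / n := by
  have : (0 : ℝ) < n := mod_cast hn
  have hm0 : (0 : ℝ) < m := mod_cast hn.trans hnm
  rw [exp_sub, exp_log (by positivity)]
  field_simp

theorem one_le_log_exp_one_mul_div (hn : 1 ≤ n) (hnm : n ≤ m) : 1 ≤ log (exp 1 * m / n) := by
  have hn0 : (0 : ℝ) < n := mod_cast hn
  rw [le_log_iff_exp_le (by have : (0 : ℝ) < m := mod_cast hn.trans hnm; positivity),
    le_div_iff₀ hn0]
  gcongr

theorem one_add_two_mul_div_le_exp (hn : 1 ≤ n) (hnm : n ≤ m) (ht : 0 < t)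
    (htn : n ≤ 1000 * log (exp 1 * m / n) * t) :
    (1 + 2 * m / t : ℝ) ≤ exp (6 + 2 * log (exp 1 * m / n)) := by
  have hn0 : (0 : ℝ) < n := mod_cast hn
  have ht0 : (0 : ℝ) < t := mod_cast ht
  have hratio := exp_log_exp_one_mul_div_sub_one hn hnm
  have hL1 := one_le_log_exp_one_mul_div hn hnm
  set L := log (exp 1 * m / n)
  have hL_le : L ≤ exp (L - 1) := by linarith [add_one_le_exp (L - 1)]
  have hexp8 : (2001 : ℝ) ≤ exp 8 := by
    calc (2001 : ℝ) ≤ 2.7 ^ 8 := by norm_num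
      _ ≤ exp 1 ^ 8 := by gcongr; linarith [exp_one_gt_d9]
      _ = exp 8 := by rw [← exp_nat_mul]; norm_num
  calc (1 + 2 * m / t : ℝ) ≤ 1 + 2000 * (L * (m / n)) := by
        gcongr 1 + ?_
        rw [← mul_div_assoc, mul_div_assoc', div_le_div_iff₀ ht0 hn0]
        linarith [mul_le_mul_of_nonneg_left htn (by positivity : (0 : ℝ) ≤ 2 * m)]
    _ ≤ 1 ^ 2 + 2000 * (exp (L - 1) * exp (L - 1)) := by
        rw [hratio, one_pow]
        gcongr
        rwa [← hratio]
    _ ≤ exp (L - 1) ^ 2 + 2000 * (exp (L - 1) * exp (L - 1)) := by gcongr; linarith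
    _ = 2001 * exp (L - 1) ^ 2 := by ring
    _ ≤ exp 8 * exp (L - 1) ^ 2 := by gcongr
    _ = exp (6 + 2 * L) := by
        rw [← exp_nat_mul, ← exp_add]
        congr 1
        push_cast
        ring

theorem pow_mul_exp_mul_exp_neg_lt_one {N : ℕ} (hn : 1 ≤ n) (hnm : n ≤ m) (ht : 0 < t)
    (htn : n ≤ 1000 * log (exp 1 * m / n) * t) (hnt : 500 * log (exp 1 * m / n) * t ≤ n)
    (hN : N + t + 1 = n) :
    (1 + 2 * m / t : ℝ) ^ t * exp t * (2 * exp (-(N / 32))) < 1 := by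
  have ht1 : (1 : ℝ) ≤ t := mod_cast ht
  have hNn : (N : ℝ) + t + 1 = n := mod_cast hN
  have hbase := one_add_two_mul_div_le_exp hn hnm ht htn
  have hL1 := one_le_log_exp_one_mul_div hn hnm
  set L := log (exp 1 * m / n)
  calc (1 + 2 * m / t : ℝ) ^ t * exp t * (2 * exp (-(N / 32)))
      ≤ exp (6 + 2 * L) ^ t * exp t * (exp 1 * exp (-(N / 32))) := by
        gcongr
        linarith [add_one_le_exp (1 : ℝ)]
    _ = exp (t * (6 + 2 * L) + t + (1 + -(N / 32))) := by
        rw [← exp_nat_mul, ← exp_add, ← exp_add, ← exp_add]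
    _ < 1 := by
        rw [exp_lt_one_iff]
        nlinarith

theorem exists_codim_split (hn : 1 ≤ n) (hnm : n ≤ m) (hD : 500 * log (exp 1 * m / n) ≤ n) :
    ∃ t N : ℕ, 0 < t ∧ 0 < N ∧ N + t + 1 = n ∧ n ≤ 1000 * log (exp 1 * m / n) * t ∧
      500 * log (exp 1 * m / n) * t ≤ n := by
  have hL1 := one_le_log_exp_one_mul_div hn hnm
  set L := log (exp 1 * m / n)
  set Y : ℝ := n / (500 * L) with hY
  have hY1 : 1 ≤ Y := (one_le_div (by positivity)).2 hD
  have ht1 : 1 ≤ ⌊Y⌋₊ := Nat.one_le_floor_iff Y |>.2 hY1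
  have htn : n ≤ 1000 * L * ⌊Y⌋₊ := by
    have hYt : Y ≤ 2 * ⌊Y⌋₊ := by
      have : (1 : ℝ) ≤ ⌊Y⌋₊ := mod_cast ht1
      linarith [Nat.lt_floor_add_one Y]
    rw [hY, div_le_iff₀ (by positivity), ← hY] at hYt
    linarith
  have hnt : 500 * L * ⌊Y⌋₊ ≤ n := by
    have htY : ⌊Y⌋₊ ≤ Y := Nat.floor_le (by positivity)
    rw [hY, le_div_iff₀ (by positivity), ← hY] at htY
    linarith
  have hlt : 500 * ⌊Y⌋₊ ≤ n := by
    have : (500 * ⌊Y⌋₊ : ℝ) ≤ n := by nlinarith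
    exact mod_cast this
  exact ⟨⌊Y⌋₊, n - 1 - ⌊Y⌋₊, ht1, by omega, by omega, htn, hnt⟩

theorem statement15_general (hp0 : 0 < p) (hp1 : p ≤ 1) (hpq : p ≤ q) (hq2 : q ≤ 2) {lam : ℝ}
    (hlam : 0 ≤ lam) (hσ : ∀ j : Fin m, |σ j| ≤ ((j : ℕ) + 1 : ℝ) ^ (-lam)) (hn : 1 ≤ n)
    (hnm : n ≤ m) (hD : 500 * log (exp 1 * m / n) ≤ n) :
    gelfandFin p q σ n ≤ 4225000 ^ (lam + 1 / p.toReal - 1 / q.toReal) *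
      (log (exp 1 * m / n) / n) ^ (lam + 1 / p.toReal - 1 / q.toReal) := by
  obtain ⟨t, N, ht, hN, hNt, htn, hnt⟩ := exists_codim_split hn hnm hD
  have ht0 : (0 : ℝ) < t := mod_cast ht
  have hn0 : (0 : ℝ) < n := mod_cast hn
  have hL : 0 < log (exp 1 * m / n) := one_pos.trans_le (one_le_log_exp_one_mul_div hn hnm)
  set R := log (exp 1 * m / n) / n with hR_def
  have hR : 0 < R := div_pos hL hn0
  set β := 1 / p.toReal - 1 / q.toReal
  have hβ : 0 ≤ β := sub_nonneg.2 <| one_div_le_one_div_of_le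
    (ENNReal.toReal_pos hp0.ne' (hp1.trans_lt ENNReal.one_lt_top).ne)
    (ENNReal.toReal_mono (hq2.trans_lt ENNReal.ofNat_lt_top).ne hpq)
  have hinv : (t : ℝ)⁻¹ ≤ 1000 * R := by
    rw [inv_le_iff_one_le_mul₀ ht0, hR_def, mul_div_assoc', div_mul_eq_mul_div, one_le_div hn0]
    exact htn
  have htail (j : Fin m) (hj : t ≤ j) : |σ j| ≤ (t : ℝ) ^ (-lam) :=
    (hσ j).trans <| rpow_le_rpow_of_nonpos ht0 (by exact_mod_cast hj.trans j.val.le_succ)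
      (neg_nonpos.2 hlam)
  calc gelfandFin p q σ n
      ≤ (t : ℝ) ^ (-lam) * (4225 / t) ^ β :=
        gelfandFin_le_mul_rpow hp0 hp1 hpq hq2 ht hN (by omega) (by omega)
          (pow_mul_exp_mul_exp_neg_lt_one hn hnm ht htn hnt hNt) (by positivity) htail
    _ = (t : ℝ)⁻¹ ^ lam * (4225 * (t : ℝ)⁻¹) ^ β := by
        rw [rpow_neg ht0.le, inv_rpow ht0.le, div_eq_mul_inv]
    _ ≤ (4225000 * R) ^ lam * (4225000 * R) ^ β := by
        gcongr ?_ ^ lam * ?_ ^ β <;> linarith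
    _ = 4225000 ^ (lam + 1 / p.toReal - 1 / q.toReal) *
          R ^ (lam + 1 / p.toReal - 1 / q.toReal) := by
        rw [← rpow_add (by positivity), mul_rpow (by norm_num) hR.le, add_sub_assoc]

end Gelfand

/-- For `0 < p ≤ 1`, `p < q ≤ 2`, `λ > 0` and `σ_j = j^{-λ}` (0-indexed),
for all `1 ≤ n < m` with `n ≥ D log(e m/n)`:
`c_n(D_σ : ℓ_p^m → ℓ_q^m) ≤ K (log(e m/n)/n)^{λ + 1/p - 1/q}`. -/
theorem statement15 (p q : ℝ≥0∞) (hp0 : 0 < p) (hp1 : p ≤ 1) (hpq : p < q) (hq2 : q ≤ 2)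
    (lam : ℝ) (hlam : 0 < lam) :
    ∃ D K : ℝ, 0 < D ∧ 0 < K ∧
      ∀ (m n : ℕ), 1 ≤ n → n < m →
        D * Real.log (Real.exp 1 * m / n) ≤ n →
        gelfandFin p q (fun j : Fin m => ((j : ℕ) + 1 : ℝ) ^ (-lam)) n ≤
          K * (Real.log (Real.exp 1 * m / n) / n) ^ (lam + 1 / p.toReal - 1 / q.toReal) := by
  refine ⟨500, 4225000 ^ (lam + 1 / p.toReal - 1 / q.toReal), by norm_num, by positivity,
    fun m n hn hnm hD ↦ statement15_general hp0 hp1 hpq.le hq2 hlam.le (fun j ↦ ?_) hn hnm.le hD⟩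
  exact (abs_of_nonneg (by positivity)).le
end
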